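/- arXiv:0708.1620 — 3 statements merged into one kernel-verified Lean document; each statement's English description precedes it below -/
import Mathlib

section
/- Let K be a perfect field of characteristic p > 0. Then the restriction map res : Aut_K(A_1) → Aut_K(Z), σ ↦ σ|_Z, is an injective group homomorphism whose image is exactly Γ = {τ ∈ Aut_K(Z) : J(τ) = 1}. In particular, Aut_K(A_1) is isomorphic as a group to Γ. -/
/-!
STATEMENT 4: Let `K` be a perfect field of characteristic `p > 0`.  Then the restriction
map `res : Aut_K(A₁) → Aut_K(Z)`, `σ ↦ σ|_Z`, is an injective group homomorphism whose
image is exactly `Γ = {τ ∈ Aut_K(Z) : J(τ) = 1}`.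

Here the centre `Z` of `A₁` is identified with the polynomial algebra `K[X, Y]`
(`X = x^p`, `Y = ∂^p`) via an isomorphism `ψ`, and `res` is characterised by the
condition `ψ (res σ f) = σ (ψ f)` in `A₁`.
-/

noncomputable section

/-- The defining relation of the first Weyl algebra: `∂·x = x·∂ + 1`. -/
inductive WeylRel (K : Type*) [CommRing K] :
    FreeAlgebra K (Fin 2) → FreeAlgebra K (Fin 2) → Prop
  | rel : WeylRel K (FreeAlgebra.ι K 1 * FreeAlgebra.ι K 0)
      (FreeAlgebra.ι K 0 * FreeAlgebra.ι K 1 + 1)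

/-- The first Weyl algebra `A₁(K) = K⟨x, ∂ | ∂x − x∂ = 1⟩`. -/
abbrev Weyl (K : Type*) [CommRing K] := RingQuot (WeylRel K)

/-- The generator `x` of the first Weyl algebra. -/
def wX (K : Type*) [CommRing K] : Weyl K :=
  RingQuot.mkAlgHom K (WeylRel K) (FreeAlgebra.ι K 0)

/-- The generator `∂` of the first Weyl algebra. -/
def wD (K : Type*) [CommRing K] : Weyl K :=
  RingQuot.mkAlgHom K (WeylRel K) (FreeAlgebra.ι K 1)

/-- The Jacobian `J(τ) = ∂τ(X)/∂X · ∂τ(Y)/∂Y − ∂τ(X)/∂Y · ∂τ(Y)/∂X` of an automorphism of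
`K[X, Y]` (with `X = MvPolynomial.X 0`, `Y = MvPolynomial.X 1`). -/
def jacP (K : Type*) [CommRing K]
    (τ : MvPolynomial (Fin 2) K ≃ₐ[K] MvPolynomial (Fin 2) K) : MvPolynomial (Fin 2) K :=
  MvPolynomial.pderiv 0 (τ (MvPolynomial.X 0)) * MvPolynomial.pderiv 1 (τ (MvPolynomial.X 1))
    - MvPolynomial.pderiv 1 (τ (MvPolynomial.X 0)) *
        MvPolynomial.pderiv 0 (τ (MvPolynomial.X 1))

/-!
Normal ordering makes `A₁` act on polynomials in `x` and `∂` and gives each element a leading symbol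
in `∂`. Comparing symbols in `(∂ + f(x)) ^ p` shows that the automorphism `∂ ↦ ∂ + f(x)` restricts
to a shear `Y ↦ Y + F(X)` with `F(x ^ p) = (d/dx + f) ^ p (1)`, whose coefficient of degree
`deg f` is the `p`-th power of the leading coefficient of `f`. Since `F` depends additively on `f`
and `K` is perfect, all shears are restrictions, and so is `X ↦ Y ↦ -X`, the restriction of the
Fourier transform. These automorphisms of the plane generate the elementary subgroup `E`, all of
whose members have Jacobian one.

By the theorem of Jung and van der Kulk each automorphism of `K[X, Y]` is a product of an element of
`E` and some `Y ↦ c Y`, which has Jacobian `c`. On the other hand, an automorphism `σ` of `A₁`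
restricting to `Y ↦ c Y` maps `x` to `x` and `∂` to a multiple of `∂`, because `p`-th roots of
`p`-th powers of polynomials in `x` (or in `∂`) are unique; the relation then forces `σ = 1`.

The theorem of Jung and van der Kulk reduces to the claim that, of the degrees `m` and `n` of the
restrictions to an axis of the coordinates of an automorphism, one divides the other. The first
coordinate `F` of the inverse vanishes along the curve parametrised by these restrictions, so its
leading form is divisible by some `β ^ b x ^ a - α ^ a y ^ b` with `a / b = n / m` in lowest terms.
The leading form, and with it this factor, is also invariant under a nonconstant one-parameter
family of substitutions, obtained from the translations along the fibres of `F`. If `a` and `b` were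
at least two, this would give a nonconstant polynomial point on a curve of the type
`ξ P ^ a + ζ Q ^ b = h`, which the Mason-Stothers argument excludes.
-/

section LeadingForm

open Polynomial

variable {k A B M : Type*} [CommRing k] [CommRing A] [Algebra k A] [CommRing B] [Algebra k B]
  [AddCommMonoid M] [PartialOrder M]

/-- The rules satisfied by a leading form relation on a filtered algebra: `L n a b` means
that `a` has degree at most `n` and `b` is its component of degree `n`. The component may live in
another algebra `B`, such as the coefficients. -/
structure IsLeadingForm (k : Type*) [CommRing k] [Algebra k A] [Algebra k B]
    (L : M → A → B → Prop) : Prop where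
  one : L 0 1 1
  zero (n : M) : L n 0 0
  mul {m n : M} {a a' : A} {b b' : B} : L m a b → L n a' b' → L (m + n) (a * a') (b * b')
  add {n : M} {a a' : A} {b b' : B} : L n a b → L n a' b' → L n (a + a') (b + b')
  smul (c : k) {n : M} {a : A} {b : B} : L n a b → L n (c • a) (c • b)
  of_lt {m n : M} {a : A} {b : B} : m < n → L m a b → L n a 0

namespace IsLeadingForm

variable {L : M → A → B → Prop}

lemma sum (hL : IsLeadingForm k L) {ι : Type*} {n : M} {f : ι → A} {g : ι → B} (s : Finset ι)
    (h : ∀ i ∈ s, L n (f i) (g i)) : L n (∑ i ∈ s, f i) (∑ i ∈ s, g i) := by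
  classical
  induction s using Finset.induction_on with
  | empty => simpa using hL.zero n
  | insert i s hi ih =>
    rw [Finset.sum_insert hi, Finset.sum_insert hi]
    exact hL.add (h i (Finset.mem_insert_self i s))
      (ih fun j hj ↦ h j (Finset.mem_insert_of_mem hj))

lemma pow (hL : IsLeadingForm k L) {n : M} {a : A} {b : B} (h : L n a b) (e : ℕ) :
    L (e • n) (a ^ e) (b ^ e) := by
  induction e with
  | zero => simpa using hL.one
  | succ e ih => simpa only [succ_nsmul, pow_succ] using hL.mul ih h

lemma comap {M' : Type*} [AddCommMonoid M'] [PartialOrder M'] (hL : IsLeadingForm k L)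
    (φ : M' →+ M) (hφ : StrictMono φ) : IsLeadingForm k fun n ↦ L (φ n) where
  one := by simpa using hL.one
  zero n := hL.zero _
  mul h h' := by simpa using hL.mul h h'
  add := hL.add
  smul c _ _ _ := hL.smul c
  of_lt hlt := hL.of_lt (hφ hlt)

variable {σ : Type*} {w : σ → M} {φ : σ → A} {φ' : σ → B}

lemma aeval_monomial_one (hL : IsLeadingForm k L) (h : ∀ i, L (w i) (φ i) (φ' i)) (d : σ →₀ ℕ) :
    L (Finsupp.weight w d) (MvPolynomial.aeval φ (MvPolynomial.monomial d (1 : k)))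
      (MvPolynomial.aeval φ' (MvPolynomial.monomial d (1 : k))) := by
  induction d using Finsupp.induction_linear with
  | zero => simpa using hL.one
  | add d e hd he =>
    rw [map_add, ← one_mul (1 : k), ← MvPolynomial.monomial_mul, map_mul, map_mul]
    exact hL.mul hd he
  | single i e => simpa [MvPolynomial.aeval_monomial, Finsupp.weight_single] using hL.pow (h i) e

theorem aeval (hL : IsLeadingForm k L) (h : ∀ i, L (w i) (φ i) (φ' i)) {n : M}
    {F : MvPolynomial σ k} (hF : ∀ d ∈ F.support, Finsupp.weight w d ≤ n) :
    L n (MvPolynomial.aeval φ F)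
      (MvPolynomial.aeval φ' (MvPolynomial.weightedHomogeneousComponent w n F)) := by
  classical
  have hmon : ∀ d ∈ F.support, L n (MvPolynomial.aeval φ (MvPolynomial.monomial d (F.coeff d)))
      (if Finsupp.weight w d = n then
        MvPolynomial.aeval φ' (MvPolynomial.monomial d (F.coeff d)) else 0) := by
    intro d hd
    have hsmul : MvPolynomial.monomial d (F.coeff d) =
        F.coeff d • MvPolynomial.monomial d (1 : k) := by
      rw [MvPolynomial.smul_monomial, smul_eq_mul, mul_one]
    rw [hsmul, map_smul, map_smul]
    have hd1 := hL.smul (F.coeff d) (hL.aeval_monomial_one h d)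
    split_ifs with hdn
    · exact hdn ▸ hd1
    · exact hL.of_lt ((hF d hd).lt_of_ne hdn) hd1
  have hsum := hL.sum F.support hmon
  rw [← map_sum, ← MvPolynomial.as_sum, ← Finset.sum_filter, ← map_sum] at hsum
  rwa [MvPolynomial.weightedHomogeneousComponent_apply]

lemma polynomial {M : Type*} [AddCommGroup M] [PartialOrder M] [IsOrderedAddMonoid M]
    {L : M → A → B → Prop} (hL : IsLeadingForm k L) (t : M) :
    IsLeadingForm k fun (n : M) (P : A[X]) (Q : B[X]) ↦
      ∀ i, L (n - i • t) (P.coeff i) (Q.coeff i) where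
  one i := by
    rcases eq_or_ne i 0 with rfl | hi
    · simpa using hL.one
    · simpa [coeff_one, hi] using hL.zero _
  zero n i := by simpa using hL.zero _
  mul {m n P P' Q Q'} h h' i := by
    rw [coeff_mul, coeff_mul]
    refine hL.sum _ fun e he ↦ ?_
    have hmn : m + n - i • t = (m - e.1 • t) + (n - e.2 • t) := by
      rw [← Finset.HasAntidiagonal.mem_antidiagonal.mp he, add_nsmul]
      abel
    exact hmn ▸ hL.mul (h _) (h' _)
  add h h' i := by simpa using hL.add (h i) (h' i)
  smul c {n P Q} h i := by simpa using hL.smul c (h i)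
  of_lt hlt h i := by simpa using hL.of_lt (sub_lt_sub_right hlt _) (h i)

end IsLeadingForm

lemma isLeadingForm_coeff :
    IsLeadingForm k fun n (f : k[X]) c ↦ f.natDegree ≤ n ∧ f.coeff n = c where
  one := by simp
  zero n := by simp
  mul := by
    rintro m n f g _ _ ⟨hf, rfl⟩ ⟨hg, rfl⟩
    exact ⟨natDegree_mul_le_of_le hf hg, coeff_mul_add_eq_of_natDegree_le hf hg⟩
  add := by
    rintro n f g _ _ ⟨hf, rfl⟩ ⟨hg, rfl⟩
    exact ⟨natDegree_add_le_of_degree_le hf hg, coeff_add f g n⟩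
  smul c n f _ := by
    rintro ⟨hf, rfl⟩
    exact ⟨(natDegree_smul_le c f).trans hf, coeff_smul c f n⟩
  of_lt := by
    rintro m n f _ hmn ⟨hf, rfl⟩
    exact ⟨hf.trans hmn.le, coeff_eq_zero_of_natDegree_lt (hf.trans_lt hmn)⟩

open MvPolynomial in
lemma weightedHomogeneousComponent_mul_of_weight_le {σ : Type*} [IsOrderedCancelAddMonoid M]
    {w : σ → M} {m n : M} {f g : MvPolynomial σ k}
    (hf : ∀ d ∈ f.support, Finsupp.weight w d ≤ m) (hg : ∀ d ∈ g.support, Finsupp.weight w d ≤ n) :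
    weightedHomogeneousComponent w (m + n) (f * g) =
      weightedHomogeneousComponent w m f * weightedHomogeneousComponent w n g := by
  classical
  ext d
  rw [coeff_weightedHomogeneousComponent]
  split_ifs with hd
  · rw [MvPolynomial.coeff_mul, MvPolynomial.coeff_mul]
    refine Finset.sum_congr rfl fun e he ↦ ?_
    rw [coeff_weightedHomogeneousComponent, coeff_weightedHomogeneousComponent]
    by_cases hfg : coeff e.1 f = 0 ∨ coeff e.2 g = 0
    · rcases hfg with h | h <;> simp [h]
    · rw [not_or] at hfg
      rw [← Finset.HasAntidiagonal.mem_antidiagonal.mp he, map_add] at hd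
      obtain ⟨h₁, h₂⟩ := (add_eq_add_iff_eq_and_eq
        (hf _ (MvPolynomial.mem_support_iff.mpr hfg.1))
        (hg _ (MvPolynomial.mem_support_iff.mpr hfg.2))).mp hd
      rw [if_pos h₁, if_pos h₂]
  · exact (((weightedHomogeneousComponent_isWeightedHomogeneous m f).mul
      (weightedHomogeneousComponent_isWeightedHomogeneous n g)).coeff_eq_zero d hd).symm

/-- All monomials of `f` have weight at most `n`, and `g` is the component of weight `n` of `f`. -/
def HasLeadingForm {σ : Type*} (w : σ → M) (n : M) (f g : MvPolynomial σ k) : Prop :=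
  (∀ d ∈ f.support, Finsupp.weight w d ≤ n) ∧ MvPolynomial.weightedHomogeneousComponent w n f = g

open MvPolynomial in
lemma hasLeadingForm_X {σ : Type*} (w : σ → M) (j : σ) :
    HasLeadingForm w (w j) (X j : MvPolynomial σ k) (X j) :=
  ⟨fun _ hd ↦ (isWeightedHomogeneous_X k w j (mem_support_iff.mp hd)).le,
    (isWeightedHomogeneous_X k w j).weightedHomogeneousComponent_same⟩

open MvPolynomial in
lemma isLeadingForm_hasLeadingForm {σ : Type*} [IsOrderedCancelAddMonoid M] (w : σ → M) :
    IsLeadingForm k (HasLeadingForm (k := k) w) where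
  one := by
    refine ⟨fun d hd ↦ ?_, (isWeightedHomogeneous_one k w).weightedHomogeneousComponent_same⟩
    exact ((isWeightedHomogeneous_one k w) (mem_support_iff.mp hd)).le
  zero n := ⟨by simp, map_zero _⟩
  mul := by
    classical
    rintro m n f g _ _ ⟨hf, rfl⟩ ⟨hg, rfl⟩
    refine ⟨fun d hd ↦ ?_, weightedHomogeneousComponent_mul_of_weight_le hf hg⟩
    obtain ⟨e₁, he₁, e₂, he₂, rfl⟩ := Finset.mem_add.mp (support_mul f g hd)
    rw [map_add]
    exact add_le_add (hf _ he₁) (hg _ he₂)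
  add := by
    classical
    rintro n f g _ _ ⟨hf, rfl⟩ ⟨hg, rfl⟩
    refine ⟨fun d hd ↦ ?_, map_add _ _ _⟩
    rcases Finset.mem_union.mp (support_add hd) with h | h
    exacts [hf _ h, hg _ h]
  smul c n f _ := by
    rintro ⟨hf, rfl⟩
    exact ⟨fun d hd ↦ hf d (support_smul hd), map_smul _ _ _⟩
  of_lt := by
    rintro m n f _ hmn ⟨hf, rfl⟩
    exact ⟨fun d hd ↦ (hf d hd).trans hmn.le, weightedHomogeneousComponent_eq_zero' n f
      fun d hd ↦ ((hf d hd).trans_lt hmn).ne⟩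

lemma aeval_leadingCoeff_weightedHomogeneousComponent_eq_zero {σ : Type*} {u : σ → k[X]}
    {F : MvPolynomial σ k} {n : ℕ}
    (hn : ∀ d ∈ F.support, Finsupp.weight (fun j ↦ (u j).natDegree) d ≤ n)
    (hF : MvPolynomial.aeval u F = 0) :
    MvPolynomial.aeval (fun j ↦ (u j).leadingCoeff)
      (MvPolynomial.weightedHomogeneousComponent (fun j ↦ (u j).natDegree) n F) = 0 := by
  have hlead := isLeadingForm_coeff.aeval (fun j ↦ ⟨le_rfl, coeff_natDegree (p := u j)⟩) hn
  rw [← hlead.2, hF, coeff_zero]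

open MvPolynomial in
lemma weightedHomogeneousComponent_weightedTotalDegree_ne_zero {σ : Type*} (w : σ → ℕ)
    {F : MvPolynomial σ k} (hF : F ≠ 0) :
    weightedHomogeneousComponent w (weightedTotalDegree w F) F ≠ 0 := by
  classical
  obtain ⟨d, hd, hdn⟩ : ∃ d ∈ F.support, weightedTotalDegree w F = Finsupp.weight w d :=
    Finset.exists_mem_eq_sup F.support (support_nonempty.mpr hF) fun d ↦ Finsupp.weight w d
  intro h0
  have hcoeff := congrArg (MvPolynomial.coeff d) h0
  rw [coeff_weightedHomogeneousComponent, if_pos hdn.symm, MvPolynomial.coeff_zero] at hcoeff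
  exact MvPolynomial.mem_support_iff.mp hd hcoeff

end LeadingForm

section CuspForm

variable {k : Type*} [Field k]

/-- On the cusp `β ^ b x ^ a = α ^ a y ^ b` the monomials of a given weight, where `x` has weight
`b` and `y` has weight `a`, are proportional to their values at the point `(α, β)`. -/
lemma pow_mul_pow_mul_comm_of_weight_eq {R : Type*} [CommRing R] {α β x y : R} {a b : ℕ}
    (hab : a.Coprime b) (ha : a ≠ 0) (h : β ^ b * x ^ a = α ^ a * y ^ b) {i j i' j' : ℕ}
    (hw : i * b + j * a = i' * b + j' * a) :
    α ^ i' * β ^ j' * (x ^ i * y ^ j) = α ^ i * β ^ j * (x ^ i' * y ^ j') := by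
  wlog hi : i' ≤ i generalizing i j i' j'
  · exact (this hw.symm (le_of_not_ge hi)).symm
  obtain ⟨m, rfl⟩ := Nat.exists_eq_add_of_le hi
  obtain ⟨l, rfl⟩ : a ∣ m := by
    have hmb : a ∣ m * b := by
      refine (Nat.dvd_add_left (dvd_mul_left a j)).mp ⟨j', ?_⟩
      linarith
    exact hab.dvd_of_dvd_mul_right hmb
  obtain rfl : j' = j + b * l := by
    refine Nat.eq_of_mul_eq_mul_right (Nat.pos_of_ne_zero ha) ?_
    linarith
  have hl : β ^ (b * l) * x ^ (a * l) = α ^ (a * l) * y ^ (b * l) := by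
    simpa only [mul_pow, ← pow_mul] using congrArg (· ^ l) h
  simp only [pow_add]
  linear_combination α ^ i' * β ^ j * x ^ i' * y ^ j * hl

open MvPolynomial

/-- The binomial whose zero set is the closure of the orbit of `(α, β)` under the torus
`(x, y) ↦ (s ^ b x, s ^ a y)`. -/
def cuspForm (α β : k) (a b : ℕ) : MvPolynomial (Fin 2) k :=
  C (β ^ b) * X 0 ^ a + C (-α ^ a) * X 1 ^ b

lemma cuspForm_dvd_sub (α β : k) {a b : ℕ} (hab : a.Coprime b) (ha : a ≠ 0) {i j i' j' : ℕ}
    (hw : i * b + j * a = i' * b + j' * a) :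
    cuspForm α β a b ∣
      C (α ^ i' * β ^ j') * (X 0 ^ i * X 1 ^ j) - C (α ^ i * β ^ j) * (X 0 ^ i' * X 1 ^ j') := by
  rw [← Ideal.mem_span_singleton]
  set I := Ideal.span {cuspForm α β a b}
  have hrel : Ideal.Quotient.mk I (C β) ^ b * Ideal.Quotient.mk I (X 0) ^ a =
      Ideal.Quotient.mk I (C α) ^ a * Ideal.Quotient.mk I (X 1) ^ b := by
    simp only [← map_pow, ← map_mul]
    rw [Ideal.Quotient.eq]
    convert Ideal.mem_span_singleton_self (cuspForm α β a b) using 1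
    rw [cuspForm, map_neg, neg_mul, sub_eq_add_neg]
  have hxy := pow_mul_pow_mul_comm_of_weight_eq hab ha hrel hw
  simp only [← map_pow, ← map_mul] at hxy
  exact Ideal.Quotient.eq.mp hxy

lemma weight_fin_two (w : Fin 2 → ℕ) (d : Fin 2 →₀ ℕ) :
    Finsupp.weight w d = d 0 * w 0 + d 1 * w 1 := by
  simp [Finsupp.weight_apply, Finsupp.sum_fintype, Fin.sum_univ_two]

lemma cuspForm_dvd {α : Fin 2 → k} (hα : ∀ j, α j ≠ 0) {w : Fin 2 → ℕ} {a b g n : ℕ}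
    (hab : a.Coprime b) (ha : a ≠ 0) (hg : g ≠ 0) (hw₀ : w 0 = b * g) (hw₁ : w 1 = a * g)
    {F : MvPolynomial (Fin 2) k} (hF : IsWeightedHomogeneous w F n) (hz : aeval α F = 0) :
    cuspForm (α 0) (α 1) a b ∣ F := by
  rcases eq_or_ne F 0 with rfl | hF0
  · exact dvd_zero _
  obtain ⟨e, he⟩ := support_nonempty.mpr hF0
  have hmonomial : ∀ d ∈ F.support, cuspForm (α 0) (α 1) a b ∣
      C (α 0 ^ e 0 * α 1 ^ e 1) * monomial d (coeff d F) -
        C (coeff d F * (α 0 ^ d 0 * α 1 ^ d 1)) * (X 0 ^ e 0 * X 1 ^ e 1) := by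
    intro d hd
    have hde : d 0 * b + d 1 * a = e 0 * b + e 1 * a := by
      have hweight := (hF (mem_support_iff.mp hd)).trans (hF (mem_support_iff.mp he)).symm
      rw [weight_fin_two, weight_fin_two, hw₀, hw₁] at hweight
      refine Nat.eq_of_mul_eq_mul_right (Nat.pos_of_ne_zero hg) ?_
      linarith
    convert (cuspForm_dvd_sub (α 0) (α 1) hab ha hde).mul_left (C (coeff d F)) using 1
    rw [monomial_eq, Finsupp.prod_fintype _ _ fun i ↦ pow_zero _, Fin.prod_univ_two,
      C_mul (a := coeff d F)]
    ring
  have hsum := Finset.dvd_sum hmonomial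
  rw [Finset.sum_sub_distrib, ← Finset.mul_sum, ← Finset.sum_mul, ← as_sum, ← map_sum] at hsum
  have hz' : ∑ d ∈ F.support, coeff d F * (α 0 ^ d 0 * α 1 ^ d 1) = 0 := by
    simpa [aeval_def, eval₂_eq', Fin.prod_univ_two] using hz
  rw [hz', C_0, zero_mul, sub_zero] at hsum
  have hunit : IsUnit (C (α 0 ^ e 0 * α 1 ^ e 1) : MvPolynomial (Fin 2) k) :=
    (IsUnit.mk0 _ (mul_ne_zero (pow_ne_zero _ (hα 0)) (pow_ne_zero _ (hα 1)))).map C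
  exact hunit.dvd_mul_left.mp hsum

lemma exists_pderiv_cuspForm_ne_zero {α β : k} (hα : α ≠ 0) (hβ : β ≠ 0) {a b p : ℕ} [CharP k p]
    (hp : p.Prime) (hab : a.Coprime b) : ∃ i, pderiv i (cuspForm α β a b) ≠ 0 := by
  by_cases ha : p ∣ a
  · have hb : (b : k) ≠ 0 := by
      rw [Ne, CharP.cast_eq_zero_iff k p]
      exact fun hb ↦ hp.not_dvd_one (hab ▸ Nat.dvd_gcd ha hb)
    refine ⟨1, ?_⟩
    have hbC : (b : MvPolynomial (Fin 2) k) ≠ 0 := by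
      rwa [← map_natCast C, Ne, map_eq_zero]
    simp [cuspForm, Derivation.leibniz_pow, Derivation.leibniz, hα, hbC]
  · have haC : (a : MvPolynomial (Fin 2) k) ≠ 0 := by
      rwa [← map_natCast C, Ne, map_eq_zero, CharP.cast_eq_zero_iff k p]
    refine ⟨0, ?_⟩
    simp [cuspForm, Derivation.leibniz_pow, Derivation.leibniz, hβ, haC]

end CuspForm

section DivisibleDegrees

open Polynomial

lemma exists_coeff_eq {R : Type*} [Semiring R] (P : R[X]) (f : ℕ → R → R)
    (hf : ∀ i, f i 0 = 0) : ∃ Q : R[X], ∀ i, Q.coeff i = f i (P.coeff i) := by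
  refine ⟨∑ i ∈ P.support, monomial i (f i (P.coeff i)), fun i ↦ ?_⟩
  rw [finsetSum_coeff]
  simp only [coeff_monomial, Finset.sum_ite_eq', mem_support_iff]
  split_ifs with h
  · rfl
  · rw [notMem_support_iff.mp h, hf]

lemma exists_forall_nsmul_le {α M : Type*} [Field M] [LinearOrder M] [IsStrictOrderedRing M]
    {S : Finset α} (hS : S.Nonempty) {e : α → ℕ} (he : ∀ s ∈ S, e s ≠ 0) (c : α → M) :
    ∃ t : M, (∀ s ∈ S, e s • t ≤ c s) ∧ ∃ s ∈ S, e s • t = c s := by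
  obtain ⟨s₀, hs₀, hmin⟩ := S.exists_min_image (fun s ↦ c s / e s) hS
  have hpos : ∀ s ∈ S, (0 : M) < e s := fun s hs ↦ Nat.cast_pos.mpr (Nat.pos_of_ne_zero (he s hs))
  refine ⟨c s₀ / e s₀, fun s hs ↦ ?_, s₀, hs₀, ?_⟩
  · rw [nsmul_eq_mul]
    exact (le_div_iff₀' (hpos s hs)).mp (hmin s hs)
  · rw [nsmul_eq_mul, mul_div_cancel₀ _ (hpos s₀ hs₀).ne']

/-- The weight of a new variable `T` is read off the Newton polygon: it is the smallest slope. -/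
lemma exists_weight_of_natDegree_ne_zero {σ ι R M : Type*} [CommRing R] [Field M] [LinearOrder M]
    [IsStrictOrderedRing M] [Finite ι] (v : σ → M) (n : ι → M) (P : ι → (MvPolynomial σ R)[X])
    (hP : ∃ j, (P j).natDegree ≠ 0) :
    ∃ t : M, (∀ j i, i ≠ 0 → ∀ d ∈ ((P j).coeff i).support, Finsupp.weight v d ≤ n j - i • t) ∧
      ∃ j i, i ≠ 0 ∧ ∃ d ∈ ((P j).coeff i).support, Finsupp.weight v d = n j - i • t := by
  classical
  have := Fintype.ofFinite ι
  let S : Finset (Σ _ : ι, Σ _ : ℕ, σ →₀ ℕ) := Finset.univ.sigma fun j ↦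
    ((P j).support.erase 0).sigma fun i ↦ ((P j).coeff i).support
  have mem_S : ∀ s, s ∈ S ↔ s.2.1 ≠ 0 ∧ s.2.2 ∈ ((P s.1).coeff s.2.1).support := by
    intro s
    have : s.2.2 ∈ ((P s.1).coeff s.2.1).support → (P s.1).coeff s.2.1 ≠ 0 := by
      rintro hd h0
      simp [h0] at hd
    simp only [S, Finset.mem_sigma, Finset.mem_univ, true_and, Finset.mem_erase, mem_support_iff]
    tauto
  have hS : S.Nonempty := by
    obtain ⟨j, hj⟩ := hP
    obtain ⟨d, hd⟩ := MvPolynomial.support_nonempty.mpr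
      (leadingCoeff_ne_zero.mpr (ne_zero_of_natDegree_gt (Nat.pos_of_ne_zero hj)))
    exact ⟨⟨j, (P j).natDegree, d⟩, (mem_S _).mpr ⟨hj, hd⟩⟩
  obtain ⟨t, hle, s, hs, heq⟩ := exists_forall_nsmul_le hS (fun s hs ↦ ((mem_S s).mp hs).1)
    fun s ↦ n s.1 - Finsupp.weight v s.2.2
  refine ⟨t, fun j i hi d hd ↦ ?_, s.1, s.2.1, ((mem_S s).mp hs).1, s.2.2, ((mem_S s).mp hs).2, ?_⟩
  · exact le_sub_comm.mp (hle ⟨j, i, d⟩ ((mem_S _).mpr ⟨hi, hd⟩))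
  · rw [heq, sub_sub_cancel]

/-- Passing to leading forms in a one-parameter family `φ` of substitutions under which `F` is
invariant: the leading form of `F` is invariant under a quasi-homogeneous family. -/
lemma exists_aeval_weightedHomogeneousComponent_eq_C {σ k : Type*} [Finite σ] [CommRing k]
    {F : MvPolynomial σ k} {w : σ → ℕ} {n : ℕ} (hn : ∀ d ∈ F.support, Finsupp.weight w d ≤ n)
    {φ : σ → (MvPolynomial σ k)[X]} (hφ₀ : ∀ j, (φ j).coeff 0 = MvPolynomial.X j)
    (hφ : ∃ j, (φ j).natDegree ≠ 0) (hF : MvPolynomial.aeval φ F = C F) :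
    ∃ φ' : σ → (MvPolynomial σ k)[X], (∀ j, (φ' j).coeff 0 = MvPolynomial.X j) ∧
      (∃ j, (φ' j).natDegree ≠ 0) ∧
      MvPolynomial.aeval φ' (MvPolynomial.weightedHomogeneousComponent w n F) =
        C (MvPolynomial.weightedHomogeneousComponent w n F) := by
  let v : σ → ℚ := fun j ↦ w j
  obtain ⟨t, hle, j₀, i₀, hi₀, d₀, hd₀, hdeg⟩ := exists_weight_of_natDegree_ne_zero v v φ hφ
  have hlead := isLeadingForm_hasLeadingForm (k := k) v
  have hX : ∀ j, HasLeadingForm v (v j) (MvPolynomial.X j : MvPolynomial σ k) _ :=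
    hasLeadingForm_X v
  choose φ' hφ' using fun j ↦ exists_coeff_eq (φ j)
    (fun i ↦ MvPolynomial.weightedHomogeneousComponent v (v j - i • t)) fun i ↦ map_zero _
  have hφ'₀ : ∀ j, (φ' j).coeff 0 = MvPolynomial.X j := fun j ↦ by
    rw [hφ' j, hφ₀ j, zero_nsmul, sub_zero, (hX j).2]
  refine ⟨φ', hφ'₀, ⟨j₀, fun h0 ↦ ?_⟩, ?_⟩
  · have hcoeff : ((φ' j₀).coeff i₀).coeff d₀ = 0 := by
      rw [coeff_eq_zero_of_natDegree_lt (h0 ▸ Nat.pos_of_ne_zero hi₀), MvPolynomial.coeff_zero]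
    classical
    rw [hφ', MvPolynomial.coeff_weightedHomogeneousComponent, if_pos hdeg] at hcoeff
    exact MvPolynomial.mem_support_iff.mp hd₀ hcoeff
  · have hcast : StrictMono (Nat.castAddMonoidHom ℚ) := Nat.strictMono_cast
    have hF₁ := (hlead.comap _ hcast).aeval (w := w) hX hn
    simp only [MvPolynomial.aeval_X_left_apply] at hF₁
    have hF₂ := ((hlead.polynomial t).comap _ hcast).aeval (w := w) (φ := φ) (φ' := φ') (by
      rintro j i
      refine ⟨?_, (hφ' j i).symm⟩
      rcases eq_or_ne i 0 with rfl | hi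
      · rw [hφ₀]
        simpa using (hX j).1
      · exact hle j i hi) hn
    rw [hF] at hF₂
    ext1 i
    rw [← (hF₂ i).2]
    rcases eq_or_ne i 0 with rfl | hi
    · rw [coeff_C_zero, coeff_C_zero, zero_nsmul, sub_zero, hF₁.2]
    · rw [coeff_C_of_ne_zero hi, coeff_C_of_ne_zero hi, map_zero]

end DivisibleDegrees

section Cusp

open Polynomial

variable {k R : Type*} [CommRing k] [CommRing R] [Algebra k R]

/-- The extension of a derivation `D` of `R` to `R[X]` that applies `D` to every coefficient. -/
def coeffDerivation (D : Derivation k R R) : Derivation k R[X] R[X] :=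
  PolynomialModule.equivPolynomialSelf.compDer D.mapCoeffs

@[simp]
lemma coeff_coeffDerivation (D : Derivation k R R) (P : R[X]) (n : ℕ) :
    (coeffDerivation D P).coeff n = D (P.coeff n) :=
  rfl

@[simp]
lemma coeffDerivation_monomial (D : Derivation k R R) (n : ℕ) (r : R) :
    coeffDerivation D (monomial n r) = monomial n (D r) := by
  ext i
  rcases eq_or_ne n i with rfl | hi <;> simp [coeff_monomial, *]

@[simp]
lemma coeffDerivation_C (D : Derivation k R R) (r : R) :
    coeffDerivation D (C r) = C (D r) :=
  coeffDerivation_monomial D 0 r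

lemma natDegree_eq_zero_of_pow_mul_eq_C [IsDomain R] {P Q : R[X]} {n : ℕ} (hn : n ≠ 0) {r : R}
    (hr : r ≠ 0) (h : P ^ n * Q = C r) : P.natDegree = 0 := by
  have hPQ : P ^ n * Q ≠ 0 := h ▸ C_ne_zero.mpr hr
  have hdeg := congrArg natDegree h
  rw [natDegree_mul (left_ne_zero_of_mul hPQ) (right_ne_zero_of_mul hPQ), natDegree_pow,
    natDegree_C] at hdeg
  simpa [hn] using (Nat.add_eq_zero_iff.mp hdeg).1

variable {D : Derivation k R R} {ξ ζ h : R} {P Q : R[X]} {a b : ℕ}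

lemma derivation_cusp {S : Type*} [CommRing S] [Algebra k S] (Δ : Derivation k S S)
    {ξ ζ h P Q : S} (hξ : Δ ξ = 0) (hζ : Δ ζ = 0) (H : ξ * P ^ a + ζ * Q ^ b = h) :
    a * ξ * P ^ (a - 1) * Δ P + b * ζ * Q ^ (b - 1) * Δ Q = Δ h := by
  rw [← H]
  simp only [map_add, Derivation.leibniz, Derivation.leibniz_pow, hξ, hζ, smul_eq_mul,
    nsmul_eq_mul]
  ring

lemma coeffDerivation_cusp (hξ : D ξ = 0) (hζ : D ζ = 0)
    (H : C ξ * P ^ a + C ζ * Q ^ b = C h) :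
    a * C ξ * P ^ (a - 1) * coeffDerivation D P + b * C ζ * Q ^ (b - 1) * coeffDerivation D Q
      = C (D h) := by
  simpa using derivation_cusp (coeffDerivation D) (by simp [hξ]) (by simp [hζ]) H

lemma derivative_cusp (H : C ξ * P ^ a + C ζ * Q ^ b = C h) :
    a * C ξ * P ^ (a - 1) * derivative P + b * C ζ * Q ^ (b - 1) * derivative Q = 0 := by
  simpa using derivation_cusp (derivative' (R := R)) (by simp) (by simp) H

/-- The Wronskian argument behind the Mason-Stothers theorem, with the derivation of the
coefficients in the place of one of the functions. -/
lemma natDegree_lt_of_cusp [IsDomain R] (hξ : D ξ = 0) (hζ : D ζ = 0) (hh : D h ≠ 0) (ha : 2 ≤ a)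
    (H : C ξ * P ^ a + C ζ * Q ^ b = C h) (hQ : derivative Q ≠ 0) :
    P.natDegree < Q.natDegree := by
  set W := coeffDerivation D P * derivative Q - derivative P * coeffDerivation D Q
  have key : P ^ (a - 1) * (a * C ξ * W) = C (D h) * derivative Q := by
    linear_combination derivative Q * coeffDerivation_cusp hξ hζ H
      - coeffDerivation D Q * derivative_cusp H
  have hne : C (D h) * derivative Q ≠ 0 := mul_ne_zero (C_ne_zero.mpr hh) hQ
  have hdeg := congrArg natDegree key
  rw [natDegree_C_mul hh, natDegree_mul (left_ne_zero_of_mul (key ▸ hne))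
    (right_ne_zero_of_mul (key ▸ hne)), natDegree_pow] at hdeg
  have hQpos : Q.natDegree ≠ 0 := fun h0 ↦ hQ (derivative_of_natDegree_zero h0)
  calc P.natDegree ≤ (a - 1) * P.natDegree := Nat.le_mul_of_pos_left _ (by lia)
    _ ≤ (derivative Q).natDegree := hdeg ▸ Nat.le_add_right _ _
    _ < Q.natDegree := natDegree_derivative_lt hQpos

lemma derivative_eq_zero_of_cusp [IsDomain R] (hξ : D ξ = 0) (hζ : D ζ = 0) (hζ₀ : ζ ≠ 0)
    (hh : D h ≠ 0) (ha : 2 ≤ a) (hb : 2 ≤ b) (H : C ξ * P ^ a + C ζ * Q ^ b = C h) :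
    derivative Q = 0 := by
  by_contra hQ
  have hPQ : P.natDegree < Q.natDegree := natDegree_lt_of_cusp hξ hζ hh ha H hQ
  have hP : derivative P = 0 := by
    by_contra hP
    exact hPQ.asymm (natDegree_lt_of_cusp hζ hξ hh hb ((add_comm _ _).trans H) hP)
  have hbR : (b : R[X]) = 0 := by
    have hQ0 : Q ≠ 0 := fun h0 ↦ hQ (by simp [h0])
    simpa [hP, hQ, hQ0, hζ₀] using derivative_cusp H
  have hconst : P ^ (a - 1) * (a * C ξ * coeffDerivation D P) = C (D h) := by
    linear_combination coeffDerivation_cusp hξ hζ H - C ζ * Q ^ (b - 1) * coeffDerivation D Q * hbR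
  have hP0 : P.natDegree = 0 := natDegree_eq_zero_of_pow_mul_eq_C (by lia) hh hconst
  rw [eq_C_of_natDegree_eq_zero hP0, ← C_pow, ← C_mul] at H
  have hdeg : (C ζ * Q ^ b).natDegree = 0 := by
    rw [eq_sub_of_add_eq' H, ← C_sub, natDegree_C]
  rw [natDegree_C_mul hζ₀, natDegree_pow] at hdeg
  rcases Nat.mul_eq_zero.mp hdeg <;> lia

/-- In characteristic `p` a solution with vanishing derivatives is a pair of polynomials in `X ^ p`,
which yields a solution of smaller degree. -/
theorem natDegree_eq_zero_of_cusp (p : ℕ) [Fact p.Prime] [CharP R p] [IsDomain R] (hξ : D ξ = 0)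
    (hζ : D ζ = 0) (hξ₀ : ξ ≠ 0) (hζ₀ : ζ ≠ 0) (hh : D h ≠ 0) (ha : 2 ≤ a) (hb : 2 ≤ b)
    (H : C ξ * P ^ a + C ζ * Q ^ b = C h) : P.natDegree = 0 ∧ Q.natDegree = 0 := by
  have hp : p.Prime := Fact.out
  induction hn : P.natDegree + Q.natDegree using Nat.strong_induction_on generalizing P Q with
  | _ n ih =>
    have hP := derivative_eq_zero_of_cusp hζ hξ hξ₀ hh hb ha ((add_comm _ _).trans H)
    have hQ := derivative_eq_zero_of_cusp hξ hζ hζ₀ hh ha hb H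
    obtain ⟨P₁, rfl⟩ : ∃ P₁, P = expand R p P₁ := ⟨_, (expand_contract p hP hp.ne_zero).symm⟩
    obtain ⟨Q₁, rfl⟩ : ∃ Q₁, Q = expand R p Q₁ := ⟨_, (expand_contract p hQ hp.ne_zero).symm⟩
    have H₁ : C ξ * P₁ ^ a + C ζ * Q₁ ^ b = C h := by
      refine expand_injective hp.pos ?_
      simpa using H
    rw [natDegree_expand, natDegree_expand, ← add_mul] at *
    rcases Nat.eq_zero_or_pos (P₁.natDegree + Q₁.natDegree) with h0 | hpos
    · obtain ⟨h₁, h₂⟩ := Nat.add_eq_zero_iff.mp h0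
      simp [h₁, h₂]
    · have hlt : P₁.natDegree + Q₁.natDegree < n := hn ▸ lt_mul_of_one_lt_right hpos hp.one_lt
      obtain ⟨h₁, h₂⟩ := ih _ hlt H₁ rfl
      simp [h₁, h₂]

end Cusp

section DividingDegrees

open MvPolynomial

variable {k : Type*} [Field k]

lemma lt_two_of_cuspForm_dvd {p : ℕ} [Fact p.Prime] [CharP k p] {α β : k} (hα : α ≠ 0)
    (hβ : β ≠ 0) {a b : ℕ} (hab : a.Coprime b) {F : MvPolynomial (Fin 2) k} (hF₀ : F ≠ 0)
    (hdvd : cuspForm α β a b ∣ F) {φ : Fin 2 → Polynomial (MvPolynomial (Fin 2) k)}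
    (hφ₀ : ∀ j, (φ j).coeff 0 = X j) (hφ : ∃ j, (φ j).natDegree ≠ 0)
    (hF : aeval φ F = Polynomial.C F) : a < 2 ∨ b < 2 := by
  by_contra! h
  obtain ⟨G, rfl⟩ := hdvd
  have hcusp : aeval φ (cuspForm α β a b) = Polynomial.C (C (β ^ b)) * φ 0 ^ a +
      Polynomial.C (C (-α ^ a)) * φ 1 ^ b := by
    simp only [cuspForm, map_add, map_mul, map_pow (aeval φ), aeval_X, aeval_C,
      Polynomial.algebraMap_apply, algebraMap_eq]
  have hconst : (aeval φ (cuspForm α β a b)).natDegree = 0 := by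
    rw [map_mul] at hF
    have hne : aeval φ (cuspForm α β a b) * aeval φ G ≠ 0 := hF ▸ Polynomial.C_ne_zero.mpr hF₀
    have hdeg := congrArg Polynomial.natDegree hF
    rw [Polynomial.natDegree_C, Polynomial.natDegree_mul (left_ne_zero_of_mul hne)
      (right_ne_zero_of_mul hne)] at hdeg
    exact (Nat.add_eq_zero_iff.mp hdeg).1
  have hval : (aeval φ (cuspForm α β a b)).coeff 0 = cuspForm α β a b := by
    rw [hcusp]
    simp [cuspForm, Polynomial.coeff_zero_eq_eval_zero, ← hφ₀]
  obtain ⟨i, hi⟩ := exists_pderiv_cuspForm_ne_zero hα hβ (Fact.out : p.Prime) hab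
  rw [Polynomial.eq_C_of_natDegree_eq_zero hconst, hval] at hcusp
  obtain ⟨h0, h1⟩ := natDegree_eq_zero_of_cusp p (D := pderiv i) (pderiv_C) (pderiv_C)
    (by simp [hβ]) (by simp [hα]) hi h.1 h.2 hcusp.symm
  obtain ⟨j, hj⟩ := hφ
  fin_cases j
  exacts [hj h0, hj h1]

/-- Restriction of polynomials in two variables to the second coordinate axis. -/
def restrictAxis (k : Type*) [CommRing k] : MvPolynomial (Fin 2) k →ₐ[k] Polynomial k :=
  aeval ![0, Polynomial.X]

/-- The family of substitutions `X ↦ τ(X)(F, G + T)`, where `(F, G)` is the inverse of `τ`: it fixes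
`F` and translates `G`. -/
def translationFamily (τ : MvPolynomial (Fin 2) k ≃ₐ[k] MvPolynomial (Fin 2) k) :
    MvPolynomial (Fin 2) k →ₐ[k] Polynomial (MvPolynomial (Fin 2) k) :=
  (aeval ![Polynomial.C (τ.symm (X 0)), Polynomial.C (τ.symm (X 1)) + Polynomial.X]).comp
    τ.toAlgHom

section TranslationFamily

variable (τ : MvPolynomial (Fin 2) k ≃ₐ[k] MvPolynomial (Fin 2) k)

lemma translationFamily_symm_X_zero :
    translationFamily τ (τ.symm (X 0)) = Polynomial.C (τ.symm (X 0)) := by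
  simp [translationFamily]

lemma translationFamily_symm_X_one :
    translationFamily τ (τ.symm (X 1)) = Polynomial.C (τ.symm (X 1)) + Polynomial.X := by
  simp [translationFamily]

lemma coeff_zero_translationFamily (f : MvPolynomial (Fin 2) k) :
    (translationFamily τ f).coeff 0 = f := by
  let ev : Polynomial (MvPolynomial (Fin 2) k) →ₐ[k] MvPolynomial (Fin 2) k :=
    (Polynomial.aeval (0 : MvPolynomial (Fin 2) k)).restrictScalars k
  have hev : ∀ P, ev P = P.coeff 0 := fun P ↦ (Polynomial.coeff_zero_eq_aeval_zero P).symm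
  have hsymm : (ev.comp (translationFamily τ)).comp τ.symm.toAlgHom = τ.symm.toAlgHom := by
    ext1 j
    fin_cases j <;> simp [hev, translationFamily]
  simpa [hev] using DFunLike.congr_fun hsymm (τ f)

lemma exists_natDegree_translationFamily_ne_zero :
    ∃ j, (translationFamily τ (X j)).natDegree ≠ 0 := by
  by_contra! h
  have hconst : translationFamily τ =
      (Algebra.ofId (MvPolynomial (Fin 2) k) (Polynomial _)).restrictScalars k := by
    ext1 j
    rw [Polynomial.eq_C_of_natDegree_eq_zero (h j), coeff_zero_translationFamily]
    rfl
  have hG := translationFamily_symm_X_one τ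
  rw [hconst] at hG
  exact Polynomial.X_ne_zero (left_eq_add.mp hG)

end TranslationFamily

theorem natDegree_restrictAxis_dvd_or_dvd {p : ℕ} [Fact p.Prime] [CharP k p]
    (τ : MvPolynomial (Fin 2) k ≃ₐ[k] MvPolynomial (Fin 2) k)
    (hτ : ∀ j, (restrictAxis k (τ (X j))).natDegree ≠ 0) :
    (restrictAxis k (τ (X 0))).natDegree ∣ (restrictAxis k (τ (X 1))).natDegree ∨
      (restrictAxis k (τ (X 1))).natDegree ∣ (restrictAxis k (τ (X 0))).natDegree := by
  set u : Fin 2 → Polynomial k := fun j ↦ restrictAxis k (τ (X j)) with hu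
  have hF₀ : τ.symm (X 0) ≠ 0 := τ.symm.map_ne_zero_iff.mpr (X_ne_zero 0)
  set F := τ.symm (X 0) with hF
  set w : Fin 2 → ℕ := fun j ↦ (u j).natDegree
  have hle : ∀ d ∈ F.support, Finsupp.weight w d ≤ weightedTotalDegree w F :=
    fun d hd ↦ le_weightedTotalDegree w hd
  have huF : aeval u F = 0 := by
    have hcomp : aeval u = (restrictAxis k).comp τ.toAlgHom := by
      ext1 j
      simp [hu]
    simp [hcomp, hF, restrictAxis]
  have hα : ∀ j, (u j).leadingCoeff ≠ 0 := fun j ↦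
    Polynomial.leadingCoeff_ne_zero.mpr (Polynomial.ne_zero_of_natDegree_gt
      (Nat.pos_of_ne_zero (hτ j)))
  obtain ⟨g, b, a, hg, hba, hw₀, hw₁⟩ :
      ∃ g b a, 0 < g ∧ b.Coprime a ∧ w 0 = b * g ∧ w 1 = a * g :=
    Nat.exists_coprime' (Nat.gcd_pos_of_pos_left (w 1) (Nat.pos_of_ne_zero (hτ 0)))
  have ha : a ≠ 0 := fun h0 ↦ hτ 1 (by simpa [h0] using hw₁)
  have hdvd := cuspForm_dvd hα hba.symm ha hg.ne' hw₀ hw₁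
    (weightedHomogeneousComponent_isWeightedHomogeneous _ F)
    (aeval_leadingCoeff_weightedHomogeneousComponent_eq_zero hle huF)
  obtain ⟨φ, hφ₀, hφ, hφF⟩ := exists_aeval_weightedHomogeneousComponent_eq_C hle
    (fun j ↦ coeff_zero_translationFamily τ (X j)) (exists_natDegree_translationFamily_ne_zero τ)
    (by rw [← comp_aeval_apply, aeval_X_left_apply]; exact translationFamily_symm_X_zero τ)
  change w 0 ∣ w 1 ∨ w 1 ∣ w 0
  have hb : b ≠ 0 := fun h0 ↦ hτ 0 (by simpa [h0] using hw₀)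
  rw [hw₀, hw₁]
  rcases lt_two_of_cuspForm_dvd (hα 0) (hα 1) hba.symm
    (weightedHomogeneousComponent_weightedTotalDegree_ne_zero w hF₀) hdvd hφ₀ hφ hφF with h | h
  · obtain rfl : a = 1 := by lia
    exact .inr (mul_dvd_mul_right (one_dvd b) g)
  · obtain rfl : b = 1 := by lia
    exact .inl (mul_dvd_mul_right (one_dvd a) g)

end DividingDegrees

section PlaneAutomorphisms

open MvPolynomial

/-- The group of automorphisms of the polynomial algebra in two variables. As usual for
endomorphisms, `(σ * τ) f = σ (τ f)`. -/
abbrev PlaneAut (R : Type*) [CommRing R] := MvPolynomial (Fin 2) R ≃ₐ[R] MvPolynomial (Fin 2) R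

namespace PlaneAut

section CommRing

variable {R : Type*} [CommRing R]

lemma ext_X {σ τ : PlaneAut R} (h₀ : σ (X 0) = τ (X 0)) (h₁ : σ (X 1) = τ (X 1)) : σ = τ := by
  refine AlgEquiv.coe_toAlgHom_injective (MvPolynomial.algHom_ext fun i ↦ ?_)
  fin_cases i
  exacts [h₀, h₁]

lemma map_polynomial_aeval (τ : PlaneAut R) (f : MvPolynomial (Fin 2) R) (F : Polynomial R) :
    τ (Polynomial.aeval f F) = Polynomial.aeval (τ f) F :=
  (Polynomial.aeval_algHom_apply τ f F).symm

lemma map_C (τ : PlaneAut R) (c : R) : τ (C c) = C c := τ.commutes c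

/-- The elementary automorphism `X₀ ↦ X₀`, `X₁ ↦ X₁ + F(X₀)`. -/
def shear (F : Polynomial R) : PlaneAut R :=
  AlgEquiv.ofAlgHom (aeval ![X 0, X 1 + Polynomial.aeval (X 0) F])
    (aeval ![X 0, X 1 - Polynomial.aeval (X 0) F])
    (by ext1 i; fin_cases i <;> simp [← Polynomial.aeval_algHom_apply])
    (by ext1 i; fin_cases i <;> simp [← Polynomial.aeval_algHom_apply])

@[simp] lemma shear_X_zero (F : Polynomial R) : shear F (X 0) = X 0 := by simp [shear]

@[simp] lemma shear_X_one (F : Polynomial R) :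
    shear F (X 1) = X 1 + Polynomial.aeval (X 0) F := by simp [shear]

lemma shear_add (F G : Polynomial R) : shear (F + G) = shear F * shear G :=
  ext_X (by simp) (by simp [map_polynomial_aeval, add_assoc])

variable (R) in
/-- The shears as a group homomorphism from the additive group of polynomials. -/
def shearHom : Multiplicative (Polynomial R) →* PlaneAut R :=
  MonoidHom.mk' (fun F ↦ shear F.toAdd) fun F G ↦ shear_add F.toAdd G.toAdd

variable (R) in
/-- The linear automorphism `X₀ ↦ X₁`, `X₁ ↦ -X₀` of determinant one. -/
def swap : PlaneAut R :=
  AlgEquiv.ofAlgHom (aeval ![X 1, -X 0]) (aeval ![-X 1, X 0])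
    (by ext1 i; fin_cases i <;> simp) (by ext1 i; fin_cases i <;> simp)

@[simp] lemma swap_X_zero : swap R (X 0) = X 1 := by simp [swap]

@[simp] lemma swap_X_one : swap R (X 1) = -X 0 := by simp [swap]

@[simp] lemma swap_inv_X_zero : (swap R)⁻¹ (X 0) = -X 1 := by
  rw [AlgEquiv.aut_inv, AlgEquiv.symm_apply_eq, map_neg, swap_X_one, neg_neg]

@[simp] lemma swap_inv_X_one : (swap R)⁻¹ (X 1) = X 0 := by
  rw [AlgEquiv.aut_inv, AlgEquiv.symm_apply_eq, swap_X_zero]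

/-- The elementary automorphism `X₀ ↦ X₀ + F(X₁)`, `X₁ ↦ X₁`. -/
def lowerShear (F : Polynomial R) : PlaneAut R := swap R * shear (-F) * (swap R)⁻¹

@[simp] lemma lowerShear_X_zero (F : Polynomial R) :
    lowerShear F (X 0) = X 0 + Polynomial.aeval (X 1) F := by
  simp [lowerShear, map_polynomial_aeval, add_comm]

@[simp] lemma lowerShear_X_one (F : Polynomial R) : lowerShear F (X 1) = X 1 := by
  simp [lowerShear]

/-- The linear automorphism `X₀ ↦ X₀`, `X₁ ↦ c X₁`. -/
def scale (c : Rˣ) : PlaneAut R :=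
  AlgEquiv.ofAlgHom (aeval ![X 0, C (c : R) * X 1]) (aeval ![X 0, C (↑c⁻¹ : R) * X 1])
    (by ext1 i; fin_cases i <;> simp [algebraMap_eq, ← mul_assoc, ← C_mul])
    (by ext1 i; fin_cases i <;> simp [algebraMap_eq, ← mul_assoc, ← C_mul])

@[simp] lemma scale_X_zero (c : Rˣ) : scale c (X 0) = X 0 := by simp [scale]

@[simp] lemma scale_X_one (c : Rˣ) : scale c (X 1) = C (c : R) * X 1 := by simp [scale]

lemma scale_one : scale (1 : Rˣ) = 1 := ext_X (by simp) (by simp)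

variable (R) in
/-- The subgroup of automorphisms generated by the shears and the swap. -/
def elementarySubgroup : Subgroup (PlaneAut R) :=
  Subgroup.closure (Set.range shear ∪ {swap R})

lemma elementarySubgroup_le_iff {G : Subgroup (PlaneAut R)} :
    elementarySubgroup R ≤ G ↔ (∀ F, shear F ∈ G) ∧ swap R ∈ G := by
  simp [elementarySubgroup, Subgroup.closure_le, Set.insert_subset_iff, Set.range_subset_iff,
    and_comm]

lemma shear_mem (F : Polynomial R) : shear F ∈ elementarySubgroup R :=
  (elementarySubgroup_le_iff.mp le_rfl).1 F

lemma swap_mem : swap R ∈ elementarySubgroup R := (elementarySubgroup_le_iff.mp le_rfl).2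

lemma lowerShear_mem (F : Polynomial R) : lowerShear F ∈ elementarySubgroup R :=
  mul_mem (mul_mem swap_mem (shear_mem _)) (inv_mem swap_mem)

/-- This is Whitehead's lemma. -/
lemma exists_mem_elementarySubgroup_diagonal (c : Rˣ) :
    ∃ s ∈ elementarySubgroup R,
      s (X 0) = C (c : R) * X 0 ∧ s (X 1) = C (↑c⁻¹ : R) * X 1 := by
  have hc : C (c : R) * C (↑c⁻¹ : R) = (1 : MvPolynomial (Fin 2) R) := by
    rw [← C_mul, Units.mul_inv, C_1]
  obtain ⟨u, hu, hu₀, hu₁⟩ : ∃ u ∈ elementarySubgroup R,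
      u (X 0) = X 0 ∧ u (X 1) = X 1 + C (c : R) * X 0 :=
    ⟨_, shear_mem (Polynomial.C (c : R) * Polynomial.X), by simp, by simp [algebraMap_eq]⟩
  obtain ⟨l, hl, hl₀, hl₁⟩ : ∃ l ∈ elementarySubgroup R,
      l (X 0) = X 0 - C (↑c⁻¹ : R) * X 1 ∧ l (X 1) = X 1 :=
    ⟨_, lowerShear_mem (-(Polynomial.C (↑c⁻¹ : R) * Polynomial.X)),
      by simp [algebraMap_eq, sub_eq_add_neg], by simp⟩
  refine ⟨u * l * u * swap R, mul_mem (mul_mem (mul_mem hu hl) hu) swap_mem, ?_, ?_⟩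
  · simp only [AlgEquiv.mul_apply, swap_X_zero, hu₀, hu₁, hl₀, hl₁, map_add, map_sub, map_mul,
      map_C]
    linear_combination (-X 1 - C (c : R) * X 0) * hc
  · simp only [AlgEquiv.mul_apply, swap_X_one, hu₀, hu₁, hl₀, map_neg, map_sub, map_mul, map_C]
    linear_combination X 0 * hc

lemma pderiv_apply (τ : PlaneAut R) (j : Fin 2) (f : MvPolynomial (Fin 2) R) :
    pderiv j (τ f) = τ (pderiv 0 f) * pderiv j (τ (X 0)) + τ (pderiv 1 f) * pderiv j (τ (X 1)) := by
  induction f using MvPolynomial.induction_on with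
  | C c => simp [map_C]
  | add f g hf hg => simp only [map_add, hf, hg]; ring
  | mul_X f i hf =>
    have hX : pderiv j (τ (X i)) =
        τ (pderiv 0 (X i)) * pderiv j (τ (X 0)) + τ (pderiv 1 (X i)) * pderiv j (τ (X 1)) := by
      fin_cases i <;> simp [pderiv_X]
    simp only [map_mul, Derivation.leibniz, smul_eq_mul, map_add, hf]
    rw [hX]
    ring

lemma jacP_mul (σ τ : PlaneAut R) : jacP R (σ * τ) = jacP R σ * σ (jacP R τ) := by
  simp only [jacP, AlgEquiv.mul_apply, pderiv_apply σ _ (τ _), map_sub, map_mul]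
  ring

lemma jacP_one : jacP R (1 : PlaneAut R) = 1 := by
  simp [jacP, pderiv_X]

variable (R) in
/-- The subgroup of automorphisms with Jacobian one. -/
def jacobianOne : Subgroup (PlaneAut R) where
  carrier := {τ | jacP R τ = 1}
  mul_mem' {σ τ} hσ hτ := by
    simp only [Set.mem_ofPred_eq] at hσ hτ ⊢
    rw [jacP_mul, hσ, hτ, map_one, one_mul]
  one_mem' := jacP_one
  inv_mem' {σ} hσ := by
    simp only [Set.mem_ofPred_eq] at hσ ⊢
    have hmul := jacP_mul σ⁻¹ σ
    rwa [inv_mul_cancel, jacP_one, hσ, map_one, mul_one, eq_comm] at hmul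

lemma mem_jacobianOne {τ : PlaneAut R} : τ ∈ jacobianOne R ↔ jacP R τ = 1 := Iff.rfl

lemma elementarySubgroup_le_jacobianOne : elementarySubgroup R ≤ jacobianOne R := by
  refine elementarySubgroup_le_iff.mpr ⟨fun F ↦ mem_jacobianOne.mpr ?_, mem_jacobianOne.mpr ?_⟩
  · simp only [jacP, shear_X_zero, shear_X_one, map_add, Derivation.map_aeval]
    simp [pderiv_X]
  · simp [jacP, pderiv_X]

lemma jacP_scale (c : Rˣ) : jacP R (scale c) = C (c : R) := by
  simp [jacP, pderiv_X]

lemma scale_mem_jacobianOne_iff {c : Rˣ} : scale c ∈ jacobianOne R ↔ c = 1 := by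
  rw [mem_jacobianOne, jacP_scale, ← C_1, C_inj, Units.val_eq_one]

lemma X_zero_dvd_of_restrictAxis_eq_zero {f : MvPolynomial (Fin 2) R}
    (hf : restrictAxis R f = 0) : X 0 ∣ f := by
  let q := Ideal.Quotient.mkₐ R (Ideal.span {(X 0 : MvPolynomial (Fin 2) R)})
  have hq₀ : q (X 0) = 0 :=
    Ideal.Quotient.eq_zero_iff_mem.mpr (Ideal.subset_span (Set.mem_singleton _))
  have hq : (Polynomial.aeval (q (X 1))).comp (restrictAxis R) = q := by
    ext1 i
    fin_cases i <;> simp [restrictAxis, hq₀]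
  have hqf : q f = 0 := by
    rw [← hq, AlgHom.comp_apply, hf, map_zero]
  exact Ideal.mem_span_singleton.mp (Ideal.Quotient.eq_zero_iff_mem.mp hqf)

lemma equivMvPolynomial_symm_apply {τ : PlaneAut R} (hτ : τ (X 0) = X 0)
    (f : MvPolynomial (Fin 2) R) :
    (Polynomial.Bivariate.equivMvPolynomial R).symm (τ f) =
      ((Polynomial.Bivariate.equivMvPolynomial R).symm f).comp
        ((Polynomial.Bivariate.equivMvPolynomial R).symm (τ (X 1))) := by
  set e := (Polynomial.Bivariate.equivMvPolynomial R).symm with he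
  have hhom : e.toAlgHom.comp τ.toAlgHom =
      ((Polynomial.aeval (e (τ (X 1)))).restrictScalars R).comp e.toAlgHom := by
    ext1 i
    fin_cases i <;> simp [he, hτ]
  simpa [Polynomial.comp_eq_aeval] using DFunLike.congr_fun hhom f

end CommRing

section IsDomain

variable {R : Type*} [CommRing R] [IsDomain R]

lemma exists_apply_X_zero_eq_of_restrictAxis_eq_zero {τ : PlaneAut R}
    (hτ : restrictAxis R (τ (X 0)) = 0) : ∃ c : Rˣ, τ (X 0) = C (c : R) * X 0 := by
  have hX : Irreducible (X 0 : MvPolynomial (Fin 2) R) := X_prime.irreducible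
  have hτX : Irreducible (τ (X 0)) := ((MulEquiv.prime_iff τ).mpr X_prime).irreducible
  obtain ⟨u, hu⟩ := (hX.dvd_irreducible_iff_associated hτX).mp
    (X_zero_dvd_of_restrictAxis_eq_zero hτ)
  obtain ⟨c, ⟨c, rfl⟩, hc⟩ := isUnit_iff_eq_C_of_isReduced.mp u.isUnit
  exact ⟨c, by rw [← hu, hc, mul_comm]⟩

lemma exists_eq_of_comp_eq_X {P Q : Polynomial R} (h : P.comp Q = Polynomial.X) :
    ∃ (c : Rˣ) (d : R), P = Polynomial.C (c : R) * Polynomial.X + Polynomial.C d := by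
  have hdeg : P.natDegree * Q.natDegree = 1 := by
    rw [← Polynomial.natDegree_comp, h, Polynomial.natDegree_X]
  obtain ⟨hP, hQ⟩ := mul_eq_one.mp hdeg
  have hlead : P.coeff 1 * Q.leadingCoeff = 1 := by
    have hcomp := Polynomial.leadingCoeff_comp (p := P) (q := Q) (hQ ▸ one_ne_zero)
    rw [h, Polynomial.leadingCoeff_X, hP, pow_one, Polynomial.leadingCoeff, hP] at hcomp
    exact hcomp.symm
  exact ⟨Units.mkOfMulEqOne _ _ hlead, P.coeff 0,
    Polynomial.eq_X_add_C_of_natDegree_le_one hP.le⟩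

lemma exists_apply_X_one_eq {τ : PlaneAut R} (hτ : τ (X 0) = X 0) :
    ∃ (c : Rˣ) (F : Polynomial R), τ (X 1) = C (c : R) * X 1 + Polynomial.aeval (X 0) F := by
  have hτ' : τ.symm (X 0) = X 0 := by rw [AlgEquiv.symm_apply_eq, hτ]
  have hcomp := equivMvPolynomial_symm_apply hτ' (τ (X 1))
  rw [AlgEquiv.symm_apply_apply, Polynomial.Bivariate.equivMvPolynomial_symm_X_1] at hcomp
  obtain ⟨u, F, hF⟩ := exists_eq_of_comp_eq_X hcomp.symm
  obtain ⟨c, hc, hu⟩ := Polynomial.isUnit_iff.mp u.isUnit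
  obtain ⟨c, rfl⟩ := hc
  refine ⟨c, F, ?_⟩
  rw [AlgEquiv.symm_apply_eq, ← hu] at hF
  rw [hF]
  simp [Polynomial.Bivariate.equivMvPolynomial, ← Polynomial.eval_map_algebraMap, algebraMap_eq]

end IsDomain

section Field

variable {K : Type*} [Field K]

lemma exists_natDegree_add_comp_lt {P Q : Polynomial K} (hP : P.natDegree ≠ 0)
    (hQ : Q.natDegree ≠ 0) (hdvd : P.natDegree ∣ Q.natDegree) :
    ∃ F : Polynomial K, (Q + F.comp P).natDegree < Q.natDegree := by
  obtain ⟨b, hb⟩ := hdvd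
  have hP₀ : P ≠ 0 := Polynomial.ne_zero_of_natDegree_gt (Nat.pos_of_ne_zero hP)
  have hQ₀ : Q ≠ 0 := Polynomial.ne_zero_of_natDegree_gt (Nat.pos_of_ne_zero hQ)
  let c := Q.leadingCoeff / P.leadingCoeff ^ b
  have hc : c ≠ 0 := by simp [c, hP₀, hQ₀]
  have hdegree : Q.degree = (Polynomial.C c * P ^ b).degree := by
    rw [Polynomial.degree_C_mul hc, Polynomial.degree_pow, Polynomial.degree_eq_natDegree hP₀,
      Polynomial.degree_eq_natDegree hQ₀, hb, mul_comm]
    simp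
  have hlead : Q.leadingCoeff = (Polynomial.C c * P ^ b).leadingCoeff := by
    simp [c, hP₀]
  have hlt : (Q - Polynomial.C c * P ^ b).natDegree < Q.natDegree := by
    rcases eq_or_ne (Q - Polynomial.C c * P ^ b) 0 with hzero | hne
    · rw [hzero, Polynomial.natDegree_zero]
      exact Nat.pos_of_ne_zero hQ
    · exact Polynomial.natDegree_lt_natDegree hne
        (Polynomial.degree_sub_lt_left hdegree hQ₀ hlead)
  exact ⟨-(Polynomial.C c * Polynomial.X ^ b), by simpa [← sub_eq_add_neg] using hlt⟩

lemma exists_scale_inv_mul_mem_of_natDegree_restrictAxis_eq_zero {τ : PlaneAut K}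
    (hτ : (restrictAxis K (τ (X 0))).natDegree = 0) :
    ∃ c : Kˣ, (scale c)⁻¹ * τ ∈ elementarySubgroup K := by
  obtain ⟨e, he⟩ := Polynomial.natDegree_eq_zero.mp hτ
  let l : PlaneAut K := lowerShear (Polynomial.C (-e))
  obtain ⟨u, hu⟩ : ∃ u : Kˣ, (τ * l) (X 0) = C (u : K) * X 0 := by
    refine exists_apply_X_zero_eq_of_restrictAxis_eq_zero ?_
    simp [l, ← he, map_C, algebraMap_eq]
  obtain ⟨d, hd, hd₀, -⟩ := exists_mem_elementarySubgroup_diagonal u⁻¹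
  have hfix : (τ * l * d) (X 0) = X 0 := by
    rw [AlgEquiv.mul_apply, hd₀, map_mul, map_C, hu, ← mul_assoc, ← C_mul]
    simp
  obtain ⟨c, F, hF⟩ := exists_apply_X_one_eq hfix
  have hscale : τ * l * d = scale c * shear F :=
    ext_X (by simp [hfix]) (by rw [hF]; simp [map_polynomial_aeval])
  refine ⟨c, ?_⟩
  rw [← mul_mem_cancel_right (lowerShear_mem (Polynomial.C (-e))), ← mul_mem_cancel_right hd,
    mul_assoc, mul_assoc, ← mul_assoc τ, hscale, inv_mul_cancel_left]
  exact shear_mem F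

/-- The theorem of Jung and van der Kulk. -/
theorem exists_scale_inv_mul_mem_elementarySubgroup {p : ℕ} [Fact p.Prime] [CharP K p]
    (τ : PlaneAut K) : ∃ c : Kˣ, (scale c)⁻¹ * τ ∈ elementarySubgroup K := by
  have reduce {τ s : PlaneAut K} (hs : s ∈ elementarySubgroup K)
      (h : ∃ c : Kˣ, (scale c)⁻¹ * (τ * s) ∈ elementarySubgroup K) :
      ∃ c : Kˣ, (scale c)⁻¹ * τ ∈ elementarySubgroup K := by
    simpa only [← mul_assoc, mul_mem_cancel_right hs] using h
  induction hn : (restrictAxis K (τ (X 0))).natDegree + (restrictAxis K (τ (X 1))).natDegree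
    using Nat.strong_induction_on generalizing τ with
  | _ n ih =>
  subst hn
  by_cases h₀ : (restrictAxis K (τ (X 0))).natDegree = 0
  · exact exists_scale_inv_mul_mem_of_natDegree_restrictAxis_eq_zero h₀
  by_cases h₁ : (restrictAxis K (τ (X 1))).natDegree = 0
  · exact reduce swap_mem
      (exists_scale_inv_mul_mem_of_natDegree_restrictAxis_eq_zero (by simpa using h₁))
  rcases natDegree_restrictAxis_dvd_or_dvd (p := p) τ (Fin.forall_fin_two.mpr ⟨h₀, h₁⟩) with h | h
  · obtain ⟨F, hF⟩ := exists_natDegree_add_comp_lt h₀ h₁ h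
    refine reduce (shear_mem F) (ih _ ?_ _ rfl)
    simpa [map_polynomial_aeval, ← Polynomial.aeval_algHom_apply, Polynomial.comp_eq_aeval]
      using hF
  · obtain ⟨F, hF⟩ := exists_natDegree_add_comp_lt h₁ h₀ h
    refine reduce (lowerShear_mem F) (ih _ ?_ _ rfl)
    simpa [map_polynomial_aeval, ← Polynomial.aeval_algHom_apply, Polynomial.comp_eq_aeval]
      using hF

end Field

end PlaneAut

end PlaneAutomorphisms

section OperatorSymbols

variable {R S : Type*} [CommRing R] [CommRing S] [Algebra R S]

open Polynomial

/-- `HasSymbol T m a` says that the operator `T` on polynomials raises degrees by at most `m` and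
multiplies top coefficients by `a`. -/
def HasSymbol (T : Module.End R S[X]) (m : ℕ) (a : S) : Prop :=
  ∀ ⦃n : ℕ⦄ ⦃f : S[X]⦄, f.natDegree ≤ n →
    (T f).natDegree ≤ m + n ∧ (T f).coeff (m + n) = a * f.coeff n

namespace HasSymbol

variable {T U : Module.End R S[X]} {m n : ℕ} {a b : S}

lemma one : HasSymbol (1 : Module.End R S[X]) 0 1 := fun n f hf ↦ by simpa using hf

lemma add (hT : HasSymbol T m a) (hU : HasSymbol U m b) : HasSymbol (T + U) m (a + b) := by
  intro n f hf
  rw [LinearMap.add_apply, coeff_add, (hT hf).2, (hU hf).2, add_mul]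
  exact ⟨natDegree_add_le_of_degree_le (hT hf).1 (hU hf).1, rfl⟩

lemma mul (hT : HasSymbol T m a) (hU : HasSymbol U n b) : HasSymbol (T * U) (m + n) (a * b) := by
  intro k f hf
  obtain ⟨hdeg, hcoeff⟩ := hT (hU hf).1
  rw [Module.End.mul_apply, add_assoc, hcoeff, (hU hf).2, mul_assoc]
  exact ⟨hdeg, rfl⟩

lemma pow (hT : HasSymbol T m a) (k : ℕ) : HasSymbol (T ^ k) (k * m) (a ^ k) := by
  induction k with
  | zero => simpa using one
  | succ k ih => simpa only [pow_succ, add_mul, one_mul] using ih.mul hT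

lemma of_lt (hT : HasSymbol T m a) (hmn : m < n) : HasSymbol T n 0 := by
  intro k f hf
  rw [coeff_eq_zero_of_natDegree_lt ((hT hf).1.trans_lt (by lia)), zero_mul]
  exact ⟨(hT hf).1.trans (by lia), rfl⟩

lemma sum {ι : Type*} {s : Finset ι} {T : ι → Module.End R S[X]} {a : ι → S}
    (hT : ∀ i ∈ s, HasSymbol (T i) m (a i)) : HasSymbol (∑ i ∈ s, T i) m (∑ i ∈ s, a i) := by
  intro n f hf
  rw [LinearMap.sum_apply, finsetSum_coeff, Finset.sum_mul]
  exact ⟨natDegree_sum_le_of_forall_le _ _ fun i hi ↦ (hT i hi hf).1,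
    Finset.sum_congr rfl fun i hi ↦ (hT i hi hf).2⟩

lemma natDegree_apply_one_le (hT : HasSymbol T m a) : (T 1).natDegree ≤ m := by
  simpa using (hT natDegree_one.le).1

lemma coeff_apply_one (hT : HasSymbol T m a) : (T 1).coeff m = a := by
  simpa using (hT natDegree_one.le).2

lemma unique (hT : HasSymbol T m a) (hT' : HasSymbol T m b) : a = b :=
  hT.coeff_apply_one.symm.trans hT'.coeff_apply_one

lemma lmul {g : S[X]} (hg : g.natDegree ≤ m) :
    HasSymbol (Algebra.lmul R S[X] g) m (g.coeff m) := fun _ _ hf ↦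
  ⟨natDegree_mul_le_of_le hg hf, coeff_mul_add_eq_of_natDegree_le hg hf⟩

lemma coeffDerivation (D : Derivation R S S) :
    HasSymbol (coeffDerivation D : S[X] →ₗ[R] S[X]) 1 0 := by
  intro n f hf
  have hcoeff (i : ℕ) (hi : n < i) : (_root_.coeffDerivation D f).coeff i = 0 := by
    rw [coeff_coeffDerivation, coeff_eq_zero_of_natDegree_lt (hf.trans_lt hi), map_zero]
  refine ⟨natDegree_le_iff_coeff_eq_zero.mpr fun i hi ↦ hcoeff i (by lia), ?_⟩
  simpa using hcoeff (1 + n) (by lia)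

end HasSymbol

/-- The connection `d/dx + f` on the trivial line bundle over the affine line. -/
def connection (f : R[X]) : Module.End R R[X] := derivative + Algebra.lmul R R[X] f

lemma connection_apply (f P : R[X]) : connection f P = derivative P + f * P := rfl

lemma hasSymbol_connection {f : R[X]} {n : ℕ} (hf : f.natDegree ≤ n) :
    HasSymbol (R := R) (S := R) (connection f) n (f.coeff n) := by
  have hderiv : HasSymbol (R := R) (S := R) derivative n 0 := by
    intro k P hP
    rw [coeff_derivative, coeff_eq_zero_of_natDegree_lt (by lia), zero_mul, zero_mul]
    exact ⟨(natDegree_derivative_le P).trans (by lia), rfl⟩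
  simpa only [connection, zero_add] using hderiv.add (.lmul hf)

end OperatorSymbols

section WeylAlgebra

open Polynomial

namespace Weyl

section CommRing

variable {R : Type*} [CommRing R]

lemma wD_mul_wX : wD R * wX R = wX R * wD R + 1 := by
  have hrel := RingQuot.mkAlgHom_rel R (WeylRel.rel (K := R))
  rwa [map_mul, map_add, map_mul, map_one] at hrel

section Lift

variable {A : Type*} [Semiring A] [Algebra R A]

/-- The universal property of the Weyl algebra: a pair of elements satisfying its relation. -/
def lift (a b : A) (h : b * a = a * b + 1) : Weyl R →ₐ[R] A :=
  RingQuot.liftAlgHom R ⟨FreeAlgebra.lift R ![a, b], by rintro _ _ ⟨⟩; simpa using h⟩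

@[simp] lemma lift_wX (a b : A) (h : b * a = a * b + 1) : lift a b h (wX R) = a := by
  rw [lift, wX, RingQuot.liftAlgHom_mkAlgHom_apply]
  simp

@[simp] lemma lift_wD (a b : A) (h : b * a = a * b + 1) : lift a b h (wD R) = b := by
  rw [lift, wD, RingQuot.liftAlgHom_mkAlgHom_apply]
  simp

lemma algHom_ext {f g : Weyl R →ₐ[R] A} (hX : f (wX R) = g (wX R)) (hD : f (wD R) = g (wD R)) :
    f = g := by
  refine RingQuot.ringQuot_ext' _ _ _ (FreeAlgebra.hom_ext (funext fun i ↦ ?_))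
  fin_cases i
  exacts [hX, hD]

end Lift

lemma algEquiv_ext {σ τ : Weyl R ≃ₐ[R] Weyl R} (hX : σ (wX R) = τ (wX R))
    (hD : σ (wD R) = τ (wD R)) : σ = τ :=
  AlgEquiv.coe_toAlgHom_injective (algHom_ext hX hD)

lemma induction {motive : Weyl R → Prop} (algebraMap : ∀ c, motive (algebraMap R (Weyl R) c))
    (wX : motive (wX R)) (wD : motive (wD R))
    (add : ∀ u v, motive u → motive v → motive (u + v))
    (mul : ∀ u v, motive u → motive v → motive (u * v)) (u : Weyl R) : motive u := by
  obtain ⟨u, rfl⟩ := RingQuot.mkAlgHom_surjective R (WeylRel R) u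
  induction u using FreeAlgebra.induction with
  | grade0 c => simpa only [AlgHom.commutes] using algebraMap c
  | grade1 i =>
    fin_cases i
    exacts [wX, wD]
  | mul u v hu hv => simpa only [map_mul] using mul _ _ hu hv
  | add u v hu hv => simpa only [map_add] using add _ _ hu hv

variable (R) in
/-- The inclusion of the polynomials in `x` into the Weyl algebra. -/
def ofPolynomial : R[X] →ₐ[R] Weyl R := aeval (wX R)

@[simp] lemma ofPolynomial_X : ofPolynomial R X = wX R := aeval_X _

@[simp] lemma ofPolynomial_C (c : R) : ofPolynomial R (C c) = algebraMap R (Weyl R) c :=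
  aeval_C _ _

lemma map_ofPolynomial {σ : Weyl R →ₐ[R] Weyl R} (hσ : σ (wX R) = wX R) (f : R[X]) :
    σ (ofPolynomial R f) = ofPolynomial R f := by
  rw [ofPolynomial, ← aeval_algHom_apply, hσ]

lemma wD_mul_ofPolynomial (f : R[X]) :
    wD R * ofPolynomial R f = ofPolynomial R f * wD R + ofPolynomial R (derivative f) := by
  induction f using Polynomial.induction_on with
  | C c => simp [Algebra.commutes]
  | add f g hf hg =>
    simp only [map_add, mul_add, add_mul, hf, hg]
    abel
  | monomial n c hf =>
    rw [pow_succ, ← mul_assoc]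
    generalize C c * X ^ n = f at hf
    simp only [map_mul, derivative_mul, derivative_X, mul_one, map_add, ofPolynomial_X,
      ← mul_assoc, hf, add_mul]
    rw [mul_assoc _ (wD R), wD_mul_wX, mul_add, mul_one, mul_assoc]
    abel

variable (R) in
/-- The representation of the Weyl algebra on normally ordered symbols `∑ fᵢ(x) ∂ⁱ`, encoded as
polynomials `∑ fᵢ Xⁱ` over `R[X]`, by left multiplication. -/
def rep : Weyl R →ₐ[R] Module.End R R[X][X] :=
  lift (Algebra.lmul R R[X][X] (C X))
    (Algebra.lmul R R[X][X] X + (coeffDerivation Polynomial.derivative').toLinearMap) (by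
      refine LinearMap.ext fun h ↦ ?_
      simp only [Algebra.coe_lmul_eq_mul, Module.End.mul_apply, LinearMap.mul_apply_apply,
        LinearMap.add_apply, Derivation.coeFn_coe, Derivation.leibniz, smul_eq_mul,
        coeffDerivation_C, derivative'_apply, derivative_X, map_one, mul_one,
        Module.End.one_apply]
      ring)

@[simp] lemma rep_wX (h : R[X][X]) : rep R (wX R) h = C X * h := by simp [rep]

lemma rep_wD (h : R[X][X]) :
    rep R (wD R) h = X * h + coeffDerivation Polynomial.derivative' h := by simp [rep]

lemma rep_ofPolynomial (f : R[X]) :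
    rep R (ofPolynomial R f) = Algebra.lmul R R[X][X] (C f) := by
  have hhom : (rep R).comp (ofPolynomial R) =
      (Algebra.lmul R R[X][X]).comp (IsScalarTower.toAlgHom R R[X] R[X][X]) := by
    ext1
    exact LinearMap.ext fun h ↦ by simp
  exact DFunLike.congr_fun hhom f

lemma rep_wD_pow_one (n : ℕ) : rep R (wD R ^ n) 1 = X ^ n := by
  induction n with
  | zero => simp
  | succ n ih =>
    rw [pow_succ', map_mul, Module.End.mul_apply, ih, rep_wD, ← monomial_one_right_eq_X_pow,
      coeffDerivation_monomial, X_mul_monomial]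
    simp [monomial_one_right_eq_X_pow]

variable (R) in
/-- The element `∑ fᵢ(x) ∂ⁱ` of the Weyl algebra with normally ordered symbol `∑ fᵢ Xⁱ`. -/
def ofSymbol : R[X][X] →+ Weyl R :=
  eval₂AddMonoidHom (ofPolynomial R : R[X] →+* Weyl R) (wD R)

lemma ofSymbol_monomial (n : ℕ) (f : R[X]) :
    ofSymbol R (monomial n f) = ofPolynomial R f * wD R ^ n := by
  simp [ofSymbol]

lemma ofSymbol_C (f : R[X]) : ofSymbol R (C f) = ofPolynomial R f := by simp [ofSymbol]

lemma ofPolynomial_mul_ofSymbol (f : R[X]) (h : R[X][X]) :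
    ofPolynomial R f * ofSymbol R h = ofSymbol R (C f * h) := by
  induction h using Polynomial.induction_on' with
  | add h₁ h₂ ih₁ ih₂ => simp only [mul_add, map_add, ih₁, ih₂]
  | monomial n g => rw [C_mul_monomial, ofSymbol_monomial, ofSymbol_monomial, map_mul, mul_assoc]

lemma wD_mul_ofSymbol (h : R[X][X]) : wD R * ofSymbol R h = ofSymbol R (rep R (wD R) h) := by
  induction h using Polynomial.induction_on' with
  | add h₁ h₂ ih₁ ih₂ => simp only [mul_add, map_add, ih₁, ih₂]
  | monomial n f =>
    rw [rep_wD, coeffDerivation_monomial, X_mul_monomial, map_add, ofSymbol_monomial,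
      ofSymbol_monomial, ofSymbol_monomial, ← mul_assoc, wD_mul_ofPolynomial, add_mul, mul_assoc,
      pow_succ']
    rfl

lemma mul_ofSymbol (u : Weyl R) (h : R[X][X]) : u * ofSymbol R h = ofSymbol R (rep R u h) := by
  induction u using Weyl.induction generalizing h with
  | algebraMap c => rw [← ofPolynomial_C, ofPolynomial_mul_ofSymbol, rep_ofPolynomial]; rfl
  | wX => rw [← ofPolynomial_X, ofPolynomial_mul_ofSymbol, rep_ofPolynomial]; rfl
  | wD => exact wD_mul_ofSymbol h
  | add u v hu hv => simp only [add_mul, map_add, hu, hv, LinearMap.add_apply]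
  | mul u v hu hv => rw [mul_assoc, hv, hu, map_mul, Module.End.mul_apply]

lemma ofSymbol_rep_one (u : Weyl R) : ofSymbol R (rep R u 1) = u := by
  rw [← mul_ofSymbol, ← C_1, ofSymbol_C, map_one, mul_one]

lemma ofPolynomial_injective : Function.Injective (ofPolynomial R) := fun f g hfg ↦ by
  simpa [rep_ofPolynomial] using congrArg (fun u ↦ rep R u 1) hfg

lemma hasSymbol_rep_ofPolynomial (f : R[X]) : HasSymbol (rep R (ofPolynomial R f)) 0 f := by
  simpa [rep_ofPolynomial] using HasSymbol.lmul (R := R) (natDegree_C f).le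

lemma hasSymbol_rep_wD : HasSymbol (rep R (wD R)) 1 1 := by
  have hrep : rep R (wD R) =
      Algebra.lmul R R[X][X] X + (coeffDerivation Polynomial.derivative').toLinearMap :=
    LinearMap.ext rep_wD
  simpa [hrep] using (HasSymbol.lmul (R := R) (natDegree_X_le (R := R[X]))).add (.coeffDerivation _)

lemma hasSymbol_rep_ofSymbol (h : R[X][X]) :
    HasSymbol (rep R (ofSymbol R h)) h.natDegree h.leadingCoeff := by
  have hterm (i : ℕ) : HasSymbol (rep R (ofPolynomial R (h.coeff i) * wD R ^ i)) i (h.coeff i) := by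
    simpa using (hasSymbol_rep_ofPolynomial (h.coeff i)).mul (hasSymbol_rep_wD.pow i)
  have hlower : HasSymbol (∑ i ∈ Finset.range h.natDegree,
      rep R (ofPolynomial R (h.coeff i) * wD R ^ i)) h.natDegree 0 := by
    simpa using HasSymbol.sum fun i hi ↦ (hterm i).of_lt (Finset.mem_range.mp hi)
  have hsum : ofSymbol R h =
      ∑ i ∈ Finset.range (h.natDegree + 1), ofPolynomial R (h.coeff i) * wD R ^ i := by
    conv_lhs => rw [h.as_sum_range, map_sum]
    simp only [ofSymbol_monomial]
  rw [hsum, Finset.sum_range_succ, map_add, map_sum]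
  simpa only [zero_add, leadingCoeff] using hlower.add (hterm h.natDegree)

lemma hasSymbol_rep (u : Weyl R) :
    HasSymbol (rep R u) (rep R u 1).natDegree (rep R u 1).leadingCoeff := by
  simpa only [ofSymbol_rep_one] using hasSymbol_rep_ofSymbol (rep R u 1)

lemma ofPolynomial_mul_wX (f : R[X]) : ofPolynomial R f * wX R = wX R * ofPolynomial R f := by
  rw [← ofPolynomial_X, ← map_mul, ← map_mul, mul_comm]

lemma wD_add_ofPolynomial_mul_wX (f : R[X]) :
    (wD R + ofPolynomial R f) * wX R = wX R * (wD R + ofPolynomial R f) + 1 := by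
  rw [add_mul, wD_mul_wX, ofPolynomial_mul_wX, mul_add]
  abel

/-- The automorphism `x ↦ x`, `∂ ↦ ∂ + f(x)`. -/
def shear (f : R[X]) : Weyl R ≃ₐ[R] Weyl R :=
  AlgEquiv.ofAlgHom (lift (wX R) (wD R + ofPolynomial R f) (wD_add_ofPolynomial_mul_wX f))
    (lift (wX R) (wD R + ofPolynomial R (-f)) (wD_add_ofPolynomial_mul_wX (-f)))
    (algHom_ext (by simp) (by simp [map_ofPolynomial]))
    (algHom_ext (by simp) (by simp [map_ofPolynomial]))

@[simp] lemma shear_wX (f : R[X]) : shear f (wX R) = wX R := by simp [shear]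

@[simp] lemma shear_wD (f : R[X]) : shear f (wD R) = wD R + ofPolynomial R f := by simp [shear]

variable (R) in
-- The sign is a scalar because the lemmas about `Neg.neg` in rings do not unify with the negation
-- of `RingQuot`.
/-- The Fourier transform `x ↦ ∂`, `∂ ↦ -x`. -/
def fourier : Weyl R ≃ₐ[R] Weyl R :=
  AlgEquiv.ofAlgHom
    (lift (wD R) ((-1 : R) • wX R) (by rw [mul_smul_comm, smul_mul_assoc, wD_mul_wX]; module))
    (lift ((-1 : R) • wD R) (wX R) (by rw [mul_smul_comm, smul_mul_assoc, wD_mul_wX]; module))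
    (algHom_ext (by simp [-neg_smul, smul_smul]) (by simp [-neg_smul]))
    (algHom_ext (by simp [-neg_smul]) (by simp [-neg_smul, smul_smul]))

@[simp] lemma fourier_wX : fourier R (wX R) = wD R := by simp [fourier]

@[simp] lemma fourier_wD : fourier R (wD R) = (-1 : R) • wX R := by simp [fourier, -neg_smul]

lemma coeff_zero_rep_wD_add_ofPolynomial_pow_one (f : R[X]) (n : ℕ) :
    (rep R ((wD R + ofPolynomial R f) ^ n) 1).coeff 0 = (connection f ^ n) 1 := by
  induction n with
  | zero => simp
  | succ n ih =>
    rw [pow_succ' (wD R + _), map_mul, Module.End.mul_apply, pow_succ', Module.End.mul_apply,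
      ← ih, map_add, LinearMap.add_apply, rep_wD, rep_ofPolynomial, connection_apply]
    simp

lemma eq_one_and_eq_of_wD_add_ofPolynomial_pow_eq {f g b : R[X]} {n : ℕ} (hn : n ≠ 0)
    (h : (wD R + ofPolynomial R f) ^ n = ofPolynomial R b * wD R ^ n + ofPolynomial R g) :
    b = 1 ∧ g = (connection f ^ n) 1 := by
  have hpos : 0 < n := Nat.pos_of_ne_zero hn
  have hleft : HasSymbol (rep R ((wD R + ofPolynomial R f) ^ n)) n 1 := by
    simpa using (hasSymbol_rep_wD.add ((hasSymbol_rep_ofPolynomial f).of_lt one_pos)).pow n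
  have hright : HasSymbol (rep R ((wD R + ofPolynomial R f) ^ n)) n b := by
    rw [h]
    simpa using ((hasSymbol_rep_ofPolynomial b).mul (hasSymbol_rep_wD.pow n)).add
      ((hasSymbol_rep_ofPolynomial g).of_lt (by simpa using hpos))
  refine ⟨hright.unique hleft, ?_⟩
  rw [← coeff_zero_rep_wD_add_ofPolynomial_pow_one, h, map_add, map_mul, LinearMap.add_apply,
    Module.End.mul_apply, rep_wD_pow_one, rep_ofPolynomial, rep_ofPolynomial]
  simp [hn.symm]

lemma eq_one_of_apply_wD_eq_smul {σ : Weyl R ≃ₐ[R] Weyl R} {c : R} (hX : σ (wX R) = wX R)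
    (hD : σ (wD R) = c • wD R) : c = 1 := by
  have hrel : (c • wD R) * wX R = wX R * (c • wD R) + 1 := by
    rw [← hX, ← hD, ← map_mul, wD_mul_wX, map_add, map_mul, map_one, hX]
  exact C_injective <| by
    simpa [rep_wD, smul_eq_C_mul] using congrArg (fun u ↦ (rep R u 1).coeff 0) hrel

end CommRing

section IsDomain

variable {R : Type*} [CommRing R] [IsDomain R]

lemma exists_eq_ofPolynomial_of_pow_eq {u : Weyl R} {n : ℕ} (hn : n ≠ 0) {f : R[X]}
    (h : u ^ n = ofPolynomial R f) : ∃ g, u = ofPolynomial R g := by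
  have hpow : HasSymbol (rep R (ofPolynomial R f)) (n * (rep R u 1).natDegree)
      ((rep R u 1).leadingCoeff ^ n) := by
    simpa only [← map_pow, h] using (hasSymbol_rep u).pow n
  have hdeg : (rep R u 1).natDegree = 0 := by
    by_contra hpos
    have hlead := hpow.unique ((hasSymbol_rep_ofPolynomial f).of_lt (by positivity))
    exact hpos (by simp [leadingCoeff_eq_zero.mp (eq_zero_of_pow_eq_zero hlead)])
  exact ⟨(rep R u 1).coeff 0, by
    rw [← ofSymbol_C, ← eq_C_of_natDegree_eq_zero hdeg, ofSymbol_rep_one]⟩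

lemma eq_ofPolynomial_of_pow_eq_pow {p : ℕ} [Fact p.Prime] [CharP R p] {u : Weyl R} {f : R[X]}
    (h : u ^ p = ofPolynomial R f ^ p) : u = ofPolynomial R f := by
  obtain ⟨g, rfl⟩ := exists_eq_ofPolynomial_of_pow_eq (NeZero.ne p) (h.trans (map_pow _ f p).symm)
  rw [← map_pow, ← map_pow] at h
  rw [frobenius_inj R[X] p (ofPolynomial_injective h)]

end IsDomain

end Weyl

end WeylAlgebra

section Restriction

open MvPolynomial

lemma addSubgroup_eq_top_of_exists_coeff_eq {R : Type*} [Ring R] {S : AddSubgroup (Polynomial R)}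
    (hS : ∀ (n : ℕ) (a : R), ∃ F ∈ S, F.natDegree ≤ n ∧ F.coeff n = a) : S = ⊤ := by
  suffices hmem : ∀ (n : ℕ) (F : Polynomial R), (∀ i, n ≤ i → F.coeff i = 0) → F ∈ S from
    (AddSubgroup.eq_top_iff' S).mpr fun F ↦
      hmem (F.natDegree + 1) F fun i hi ↦ Polynomial.coeff_eq_zero_of_natDegree_lt hi
  intro n
  induction n with
  | zero => exact fun F hF ↦ Polynomial.ext (fun i ↦ hF i i.zero_le) (q := 0) ▸ S.zero_mem
  | succ n ih =>
    intro F hF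
    obtain ⟨G, hG, hdeg, hcoeff⟩ := hS n (F.coeff n)
    have hsub : F - G ∈ S := by
      refine ih _ fun i hi ↦ ?_
      rcases hi.eq_or_lt with rfl | hlt
      · rw [Polynomial.coeff_sub, hcoeff, sub_self]
      · rw [Polynomial.coeff_sub, hF i hlt,
          Polynomial.coeff_eq_zero_of_natDegree_lt (hdeg.trans_lt hlt), sub_zero]
    exact sub_add_cancel F G ▸ S.add_mem hsub hG

namespace Weyl

variable {R : Type*} [CommRing R] {p : ℕ}

/-- The map `res` sends an automorphism of the Weyl algebra to its restriction to the image of the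
embedding `Ψ` of the polynomial algebra determined by `X₀ ↦ x ^ p`, `X₁ ↦ ∂ ^ p`. -/
structure IsCentralRestriction (p : ℕ) (Ψ : MvPolynomial (Fin 2) R →ₐ[R] Weyl R)
    (res : (Weyl R ≃ₐ[R] Weyl R) → PlaneAut R) : Prop where
  injective : Function.Injective Ψ
  apply_X_zero : Ψ (X 0) = wX R ^ p
  apply_X_one : Ψ (X 1) = wD R ^ p
  apply_res : ∀ σ f, Ψ (res σ f) = σ (Ψ f)

namespace IsCentralRestriction

variable {Ψ : MvPolynomial (Fin 2) R →ₐ[R] Weyl R} {res : (Weyl R ≃ₐ[R] Weyl R) → PlaneAut R}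

lemma map_mul (h : IsCentralRestriction p Ψ res) (σ τ : Weyl R ≃ₐ[R] Weyl R) :
    res (σ * τ) = res σ * res τ :=
  AlgEquiv.ext fun f ↦ h.injective <| by simp only [h.apply_res, AlgEquiv.mul_apply]

/-- The restriction map as a group homomorphism. -/
def toMonoidHom (h : IsCentralRestriction p Ψ res) : (Weyl R ≃ₐ[R] Weyl R) →* PlaneAut R :=
  MonoidHom.mk' res h.map_mul

lemma res_eq_iff (h : IsCentralRestriction p Ψ res) {σ : Weyl R ≃ₐ[R] Weyl R} {τ : PlaneAut R} :
    res σ = τ ↔ Ψ (τ (X 0)) = σ (wX R) ^ p ∧ Ψ (τ (X 1)) = σ (wD R) ^ p := by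
  rw [← map_pow, ← map_pow, ← h.apply_X_zero, ← h.apply_X_one, ← h.apply_res, ← h.apply_res,
    h.injective.eq_iff, h.injective.eq_iff]
  exact ⟨by rintro rfl; exact ⟨rfl, rfl⟩, fun ⟨h₀, h₁⟩ ↦ PlaneAut.ext_X h₀.symm h₁.symm⟩

lemma apply_aeval_X_zero (h : IsCentralRestriction p Ψ res) (F : Polynomial R) :
    Ψ (Polynomial.aeval (X 0) F) = ofPolynomial R (Polynomial.expand R p F) := by
  rw [← Polynomial.aeval_algHom_apply, h.apply_X_zero, ofPolynomial, Polynomial.expand_aeval]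

lemma res_fourier [Fact p.Prime] [CharP R p] (h : IsCentralRestriction p Ψ res) :
    res (fourier R) = PlaneAut.swap R := by
  rw [h.res_eq_iff]
  have hneg : (-X 0 : MvPolynomial (Fin 2) R) = (-1 : R) • X 0 := by simp
  rw [PlaneAut.swap_X_zero, PlaneAut.swap_X_one, fourier_wX, fourier_wD, hneg, map_smul, smul_pow,
    neg_one_pow_char, h.apply_X_zero, h.apply_X_one]
  exact ⟨rfl, rfl⟩

variable [IsDomain R]

lemma exists_res_shear_eq [NeZero p] (h : IsCentralRestriction p Ψ res) {f : Polynomial R} {n : ℕ}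
    (hf : f.natDegree ≤ n) : ∃ F : Polynomial R,
      res (shear f) = PlaneAut.shear F ∧ F.natDegree ≤ n ∧ F.coeff n = f.coeff n ^ p := by
  obtain ⟨h₀, h₁⟩ := h.res_eq_iff.mp (rfl : res (shear f) = _)
  have hfix : res (shear f) (X 0) = X 0 := h.injective <| by rw [h₀, shear_wX, h.apply_X_zero]
  obtain ⟨c, F, hF⟩ := PlaneAut.exists_apply_X_one_eq hfix
  have hpow : (wD R + ofPolynomial R f) ^ p =
      ofPolynomial R (Polynomial.C (c : R)) * wD R ^ p +
        ofPolynomial R (Polynomial.expand R p F) := by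
    rw [← shear_wD, ← h₁, hF, map_add, h.apply_aeval_X_zero, ← MvPolynomial.smul_eq_C_mul,
      map_smul, h.apply_X_one, ofPolynomial_C, Algebra.smul_def]
  obtain ⟨hc, hexp⟩ := eq_one_and_eq_of_wD_add_ofPolynomial_pow_eq (NeZero.ne p) hpow
  have hsym : HasSymbol (connection f ^ p) (p * n) (f.coeff n ^ p) :=
    (hasSymbol_connection hf).pow p
  have hpos : 0 < p := Nat.pos_of_neZero p
  refine ⟨F, PlaneAut.ext_X (by simp [hfix]) ?_, ?_, ?_⟩
  · rw [hF, Polynomial.C_injective (hc.trans Polynomial.C_1.symm)]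
    simp
  · refine Nat.le_of_mul_le_mul_left ?_ hpos
    rw [mul_comm, ← Polynomial.natDegree_expand, hexp]
    exact hsym.natDegree_apply_one_le
  · rw [← Polynomial.coeff_expand_mul' hpos, hexp]
    exact hsym.coeff_apply_one

variable [Fact p.Prime] [CharP R p] [PerfectRing R p]

lemma elementarySubgroup_le_range (h : IsCentralRestriction p Ψ res) :
    PlaneAut.elementarySubgroup R ≤ h.toMonoidHom.range := by
  refine PlaneAut.elementarySubgroup_le_iff.mpr ⟨fun F ↦ ?_, ⟨fourier R, h.res_fourier⟩⟩
  have htop : (h.toMonoidHom.range.comap (PlaneAut.shearHom R)).toAddSubgroup' = ⊤ := by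
    refine addSubgroup_eq_top_of_exists_coeff_eq fun n a ↦ ?_
    obtain ⟨b, hb⟩ := surjective_frobenius R p a
    obtain ⟨F, hF, hdeg, hcoeff⟩ :=
      h.exists_res_shear_eq (Polynomial.natDegree_monomial_le (m := n) b)
    exact ⟨F, ⟨_, hF⟩, hdeg, by rw [hcoeff, Polynomial.coeff_monomial_same, ← hb, frobenius_def]⟩
  exact (AddSubgroup.eq_top_iff' _).mp htop F

lemma eq_one_of_res_eq_scale (h : IsCentralRestriction p Ψ res) {σ : Weyl R ≃ₐ[R] Weyl R}
    {c : Rˣ} (hσ : res σ = PlaneAut.scale c) : c = 1 ∧ σ = 1 := by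
  obtain ⟨h₀, h₁⟩ := h.res_eq_iff.mp hσ
  rw [PlaneAut.scale_X_zero, h.apply_X_zero, ← ofPolynomial_X] at h₀
  rw [PlaneAut.scale_X_one, ← MvPolynomial.smul_eq_C_mul, map_smul, h.apply_X_one] at h₁
  have hX : σ (wX R) = wX R := by
    rw [← ofPolynomial_X, eq_ofPolynomial_of_pow_eq_pow h₀.symm]
  obtain ⟨γ, hγ⟩ := surjective_frobenius R p (c : R)
  rw [frobenius_def] at hγ
  have hD : σ (wD R) = γ • wD R := by
    have hsymm : (fourier R).symm (wD R) = wX R := by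
      rw [AlgEquiv.symm_apply_eq, fourier_wX]
    have hpow : (fourier R).symm (σ (wD R)) ^ p =
        ofPolynomial R (Polynomial.C γ * Polynomial.X) ^ p := by
      rw [← map_pow, ← h₁, map_smul, map_pow, hsymm, _root_.map_mul, ofPolynomial_C,
        ofPolynomial_X, ← Algebra.smul_def, smul_pow, hγ]
    rw [(fourier R).symm_apply_eq.mp (eq_ofPolynomial_of_pow_eq_pow hpow), _root_.map_mul,
      ofPolynomial_C, ofPolynomial_X, _root_.map_mul, AlgEquiv.commutes, fourier_wX,
      Algebra.smul_def]
  obtain rfl := eq_one_of_apply_wD_eq_smul hX hD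
  exact ⟨Units.ext (by rw [← hγ, one_pow, Units.val_one]),
    algEquiv_ext (by simpa using hX) (by simpa using hD)⟩

lemma res_injective (h : IsCentralRestriction p Ψ res) : Function.Injective res :=
  (injective_iff_map_eq_one h.toMonoidHom).mpr fun _ hσ ↦
    (h.eq_one_of_res_eq_scale (hσ.trans PlaneAut.scale_one.symm)).2

lemma scale_mem_range_iff (h : IsCentralRestriction p Ψ res) {c : Rˣ} :
    PlaneAut.scale c ∈ h.toMonoidHom.range ↔ c = 1 :=
  ⟨fun ⟨_, hσ⟩ ↦ (h.eq_one_of_res_eq_scale hσ).1, by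
    rintro rfl
    rw [PlaneAut.scale_one]
    exact one_mem _⟩

end IsCentralRestriction

section Field

variable {K : Type*} [Field K] [Fact p.Prime] [CharP K p] [PerfectRing K p]
  {Ψ : MvPolynomial (Fin 2) K →ₐ[K] Weyl K} {res : (Weyl K ≃ₐ[K] Weyl K) → PlaneAut K}

theorem IsCentralRestriction.range_eq_jacobianOne (h : IsCentralRestriction p Ψ res) :
    h.toMonoidHom.range = PlaneAut.jacobianOne K := by
  ext τ
  obtain ⟨c, hc⟩ := PlaneAut.exists_scale_inv_mul_mem_elementarySubgroup (p := p) τ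
  have mem_iff {G : Subgroup (PlaneAut K)} (hG : PlaneAut.elementarySubgroup K ≤ G) :
      PlaneAut.scale c ∈ G ↔ τ ∈ G := by
    rw [← mul_mem_cancel_right (hG hc), mul_inv_cancel_left]
  rw [← mem_iff h.elementarySubgroup_le_range,
    ← mem_iff PlaneAut.elementarySubgroup_le_jacobianOne,
    h.scale_mem_range_iff, PlaneAut.scale_mem_jacobianOne_iff]

end Field

end Weyl

end Restriction

theorem statement4 (p : ℕ) (hp : p.Prime) (K : Type*) [Field K] [CharP K p]
    (hperf : Function.Surjective fun a : K => a ^ p)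
    (ψ : MvPolynomial (Fin 2) K ≃ₐ[K] Subalgebra.center K (Weyl K))
    (hψX : (↑(ψ (MvPolynomial.X 0)) : Weyl K) = wX K ^ p)
    (hψY : (↑(ψ (MvPolynomial.X 1)) : Weyl K) = wD K ^ p)
    (res : (Weyl K ≃ₐ[K] Weyl K) → (MvPolynomial (Fin 2) K ≃ₐ[K] MvPolynomial (Fin 2) K))
    (hres : ∀ (σ : Weyl K ≃ₐ[K] Weyl K) (f : MvPolynomial (Fin 2) K),
      (↑(ψ (res σ f)) : Weyl K) = σ (↑(ψ f) : Weyl K)) :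
    (∀ σ τ, res (σ * τ) = res σ * res τ) ∧ Function.Injective res ∧
      Set.range res = {τ | jacP K τ = 1} := by
  have : Fact p.Prime := ⟨hp⟩
  have : PerfectRing K p := PerfectRing.ofSurjective K p hperf
  have h : Weyl.IsCentralRestriction p
      ((Subalgebra.center K (Weyl K)).val.comp ψ.toAlgHom) res :=
    ⟨Subtype.val_injective.comp ψ.injective, hψX, hψY, hres⟩
  exact ⟨h.map_mul, h.res_injective, congrArg SetLike.coe h.range_eq_jacobianOne⟩
end
end

section
/- Let K be a perfect field of characteristic p > 0. The additive map θ : K[x] → K[x^p] defined by θ(f) = f^p + d^{p-1}f/dx^{p-1} is an F_p-linear bijection, and for every i ≥ 0 it maps the space {f ∈ K[x] : deg f ≤ i} bijectively onto {g ∈ K[x^p] : deg_{x^p} g ≤ i} (i.e. polynomials in x^p of degree at most pi in x). -/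
/-!
STATEMENT 9: Let `K` be a perfect field of characteristic `p > 0`.  The map
`θ : K[x] → K[x^p]`, `θ(f) = f^p + d^{p-1}f/dx^{p-1}`, is an additive (`𝔽_p`-linear)
bijection onto `K[x^p]`, and for every `i ≥ 0` it maps `{f : deg f ≤ i}` bijectively onto
`{g ∈ K[x^p] : deg_{x^p} g ≤ i}`.

The subring `K[x^p]` is realised as the range of `Polynomial.expand K p`, and
`{g ∈ K[x^p] : deg_{x^p} g ≤ i}` as the image under `expand` of `{h : deg h ≤ i}`.
-/

noncomputable section

open Polynomial

/-- The map `θ(f) = f^p + d^{p-1}f/dx^{p-1}`. -/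
def theta (p : ℕ) (K : Type*) [CommRing K] (f : Polynomial K) : Polynomial K :=
  f ^ p + derivative^[p - 1] f

/-!
Write `θ f = expand p (φ f)`, which is possible because `θ f` has zero derivative. If
`natDegree f ≤ i`, the derivative term contributes nothing to the coefficient of `x ^ (i * p)` in
`θ f`, so `(φ f).coeff i = f.coeff i ^ p`. Thus `φ` is triangular for the degree filtration with the
Frobenius on each graded piece, and it is bijective on every filtration step as soon as the
Frobenius of the coefficients is.
-/

/-- An additive map between polynomial rings is degree-triangular with diagonal `σ` if it acts as
`σ` on the `i`-th coefficient of every polynomial of degree at most `i`. Taking `i` beyond the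
degree shows that such a map does not raise degrees, so this is not a separate requirement. -/
def IsDegreeTriangular {R S : Type*} [Semiring R] [Semiring S] (φ : R[X] →+ S[X]) (σ : R → S) :
    Prop :=
  ∀ ⦃f : R[X]⦄ ⦃i : ℕ⦄, f.natDegree ≤ i → (φ f).coeff i = σ (f.coeff i)

namespace IsDegreeTriangular

variable {R S : Type*} {σ : R → S}

theorem diag_zero [Semiring R] [Semiring S] {φ : R[X] →+ S[X]} (hφ : IsDegreeTriangular φ σ) :
    σ 0 = 0 := by
  simpa using (hφ (f := 0) (i := 0) (by simp)).symm

theorem natDegree_map_le [Semiring R] [Semiring S] {φ : R[X] →+ S[X]}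
    (hφ : IsDegreeTriangular φ σ) (f : R[X]) : (φ f).natDegree ≤ f.natDegree := by
  rw [natDegree_le_iff_coeff_eq_zero]
  intro i hi
  rw [hφ hi.le, coeff_eq_zero_of_natDegree_lt hi, hφ.diag_zero]

theorem injective [Ring R] [Semiring S] {φ : R[X] →+ S[X]} (hφ : IsDegreeTriangular φ σ)
    (hσ : Function.Injective σ) : Function.Injective φ := by
  refine (injective_iff_map_eq_zero φ).2 fun f hf => leadingCoeff_eq_zero.1 (hσ ?_)
  rw [leadingCoeff, ← hφ le_rfl, hf, coeff_zero, hφ.diag_zero]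

theorem exists_degree_lt_map_eq [Semiring R] [Ring S] {φ : R[X] →+ S[X]}
    (hφ : IsDegreeTriangular φ σ) (hσ : Function.Surjective σ) (n : ℕ) :
    ∀ g : S[X], g.degree < n → ∃ f : R[X], f.degree < n ∧ φ f = g := by
  induction n with
  | zero =>
    intro g hg
    have hg0 : g = 0 := by simpa using hg
    exact ⟨0, by simp, by rw [map_zero, hg0]⟩
  | succ n ih =>
    intro g hg
    obtain ⟨a, ha⟩ := hσ (g.coeff n)
    have hrem : (g - φ (monomial n a)).degree < n := by
      refine (degree_lt_iff_coeff_zero _ _).2 fun k hk => ?_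
      rw [coeff_sub, hφ ((natDegree_monomial_le a).trans hk), sub_eq_zero]
      obtain rfl | hlt := hk.eq_or_lt
      · rw [coeff_monomial_same, ha]
      · rw [(degree_lt_iff_coeff_zero _ _).1 hg k hlt, coeff_monomial_of_ne a hlt.ne',
          hφ.diag_zero]
    obtain ⟨f, hf, hfg⟩ := ih _ hrem
    have hn : (n : WithBot ℕ) < (n + 1 : ℕ) := by exact_mod_cast n.lt_succ_self
    refine ⟨f + monomial n a, ?_, by rw [map_add, hfg, sub_add_cancel]⟩
    exact (degree_add_le _ _).trans_lt
      (max_lt (hf.trans hn) ((degree_monomial_le n a).trans_lt hn))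

theorem image_natDegree_le [Semiring R] [Ring S] {φ : R[X] →+ S[X]}
    (hφ : IsDegreeTriangular φ σ) (hσ : Function.Surjective σ) (i : ℕ) :
    φ '' {f | f.natDegree ≤ i} = {g | g.natDegree ≤ i} := by
  refine Set.Subset.antisymm ?_ fun g hg => ?_
  · rintro _ ⟨f, hf, rfl⟩
    exact (hφ.natDegree_map_le f).trans hf
  · obtain ⟨f, hf, hfg⟩ := hφ.exists_degree_lt_map_eq hσ (i + 1) g
      ((degree_lt_iff_coeff_zero _ _).2 (natDegree_le_iff_coeff_eq_zero.1 hg))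
    exact ⟨f, natDegree_le_iff_coeff_eq_zero.2 ((degree_lt_iff_coeff_zero _ _).1 hf), hfg⟩

theorem surjective [Semiring R] [Ring S] {φ : R[X] →+ S[X]} (hφ : IsDegreeTriangular φ σ)
    (hσ : Function.Surjective σ) : Function.Surjective φ := by
  intro g
  obtain ⟨f, -, hf⟩ := (hφ.image_natDegree_le hσ g.natDegree).ge (le_refl g.natDegree)
  exact ⟨f, hf⟩

end IsDegreeTriangular

theorem iterate_derivative_eq_zero_of_charP {R : Type*} [Semiring R] {p : ℕ} [CharP R p]
    (hp : p ≠ 0) (f : R[X]) : derivative^[p] f = 0 := by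
  have hfact : (p.factorial : R[X]) = 0 :=
    (CharP.cast_eq_zero_iff R[X] p _).2 (Nat.dvd_factorial hp.bot_lt le_rfl)
  rw [← factorial_smul_hasseDeriv, LinearMap.smul_apply, nsmul_eq_mul, hfact, zero_mul]

theorem expand_contract_of_derivative_eq_zero {R : Type*} [CommRing R] {p : ℕ} (hp : p.Prime)
    [CharP R p] {f : R[X]} (hf : derivative f = 0) : expand R p (contract p f) = f := by
  ext n
  rw [coeff_expand hp.pos, coeff_contract hp.ne_zero]
  split_ifs with hpn
  · rw [Nat.div_mul_cancel hpn]
  · obtain ⟨m, rfl⟩ := Nat.exists_eq_succ_of_ne_zero (n := n) fun h0 => hpn (h0 ▸ dvd_zero p)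
    have hunit : IsUnit ((m + 1 : ℕ) : R) := (CharP.isUnit_natCast_iff hp).2 hpn
    have hcoeff : f.coeff (m + 1) * ((m + 1 : ℕ) : R) = 0 := by
      rw [Nat.cast_succ, ← coeff_derivative, hf, coeff_zero]
    exact (hunit.mul_left_eq_zero.1 hcoeff).symm

theorem coeff_theta_of_natDegree_le {R : Type*} [CommRing R] {p i : ℕ} (hp : 1 < p) {f : R[X]}
    (hf : f.natDegree ≤ i) : (theta p R f).coeff (i * p) = f.coeff i ^ p := by
  have hlt : f.natDegree < i * p + (p - 1) := by
    have := Nat.le_mul_of_pos_right i (zero_lt_one.trans hp)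
    lia
  rw [theta, coeff_add, coeff_iterate_derivative, coeff_eq_zero_of_natDegree_lt hlt, smul_zero,
    add_zero, mul_comm, coeff_pow_of_natDegree_le hf]

theorem derivative_theta {R : Type*} [CommRing R] {p : ℕ} [CharP R p] (hp : p ≠ 0) (f : R[X]) :
    derivative (theta p R f) = 0 := by
  rw [theta, derivative_add, derivative_pow, CharP.cast_eq_zero, C_0, zero_mul, zero_mul, zero_add,
    ← Function.iterate_succ_apply' derivative, Nat.succ_eq_add_one, Nat.sub_one_add_one hp,
    iterate_derivative_eq_zero_of_charP hp]

section CharP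

variable (p : ℕ) [Fact p.Prime] (R : Type*) [CommRing R] [CharP R p]

theorem theta_add (f g : R[X]) : theta p R (f + g) = theta p R f + theta p R g := by
  rw [theta, add_pow_char, iterate_map_add, add_add_add_comm, theta, theta]

/-- The map `θ` read in the variable `x ^ p`: the additive map `φ` with `θ f = (φ f)(x ^ p)`. -/
def contractTheta : R[X] →+ R[X] :=
  AddMonoidHom.mk' (fun f => contract p (theta p R f)) fun f g => by
    rw [theta_add, contract_add (Fact.out : p.Prime).ne_zero]

theorem expand_comp_contractTheta : expand R p ∘ contractTheta p R = theta p R :=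
  have hp : p.Prime := Fact.out
  funext fun f => expand_contract_of_derivative_eq_zero hp (derivative_theta hp.ne_zero f)

theorem isDegreeTriangular_contractTheta :
    IsDegreeTriangular (contractTheta p R) (frobenius R p) := by
  intro f i hf
  have hp : p.Prime := Fact.out
  exact (coeff_contract hp.ne_zero _ i).trans (coeff_theta_of_natDegree_le hp.one_lt hf)

theorem statement9_general [PerfectRing R p] :
    (∀ f g : R[X], theta p R (f + g) = theta p R f + theta p R g) ∧
    Function.Injective (theta p R) ∧
    Set.range (theta p R) = Set.range (expand R p) ∧
    (∀ i : ℕ, theta p R '' {f : R[X] | f.natDegree ≤ i}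
        = expand R p '' {h : R[X] | h.natDegree ≤ i}) := by
  have hφ := isDegreeTriangular_contractTheta p R
  have hsurj := surjective_frobenius R p
  refine ⟨theta_add p R, ?_, ?_, fun i => ?_⟩ <;> rw [← expand_comp_contractTheta]
  · exact (expand_injective (Fact.out : p.Prime).pos).comp (hφ.injective (injective_frobenius R p))
  · exact (hφ.surjective hsurj).range_comp _
  · rw [Set.image_comp, hφ.image_natDegree_le hsurj]

end CharP

theorem statement9 (p : ℕ) (hp : p.Prime) (K : Type*) [Field K] [CharP K p]
    (hperf : Function.Surjective fun a : K => a ^ p) :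
    (∀ f g : Polynomial K, theta p K (f + g) = theta p K f + theta p K g) ∧
    Function.Injective (theta p K) ∧
    Set.range (theta p K) = Set.range (Polynomial.expand K p) ∧
    (∀ i : ℕ, theta p K '' {f : Polynomial K | f.natDegree ≤ i}
        = (Polynomial.expand K p) '' {h : Polynomial K | h.natDegree ≤ i}) := by
  have : Fact p.Prime := ⟨hp⟩
  have : PerfectRing K p := .ofSurjective K p hperf
  exact statement9_general p K
end
end

section
/- Let K be a field of characteristic p > 0. Every K-algebra automorphism σ of the polynomial ring K[X, Y] can be written as a product σ = γ_μ ∘ t_ν ∘ φ_{f_1} ∘ s ∘ φ_{f_2} ∘ s ∘ ⋯ ∘ φ_{f_{n-1}} ∘ s ∘ φ_{f_n} for some n ≥ 1, μ, ν ∈ K^*, and f_1, …, f_n ∈ K[X]. -/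
/-!
STATEMENT 13: Let `K` be a field of characteristic `p > 0`.  Every `K`-algebra
automorphism `σ` of `K[X, Y]` can be written as
`σ = γ_μ ∘ t_ν ∘ φ_{f₁} ∘ s ∘ φ_{f₂} ∘ s ∘ ⋯ ∘ φ_{f_{n-1}} ∘ s ∘ φ_{f_n}`
for some `n ≥ 1`, `μ, ν ∈ K^*`, `f₁, …, f_n ∈ K[X]`.

Here `K[X, Y] = MvPolynomial (Fin 2) K` with `X = X 0`, `Y = X 1`; the automorphisms
`γ_μ : X ↦ μX, Y ↦ Y`, `t_ν : X ↦ νX, Y ↦ ν⁻¹Y`, `s : X ↦ Y, Y ↦ −X`,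
`φ_f : X ↦ X, Y ↦ Y + f(X)` are specified by their values on the generators; the word
`φ_{f₁} s φ_{f₂} s ⋯ φ_{f_n}` is the product of the list `w 0, w 1, …, w (2n−2)` where the
even entries are the `φ_{f_k}` and the odd entries are `s` (multiplication of
automorphisms being composition).
-/

noncomputable section

/-!
Degrees are degrees in `Y`. The word is produced by induction on `b = deg Φ(X)`, for an
automorphism `Φ` of `K[X][Y]`. If `b > 0`, then modulo `X` the polynomials `Φ⁻¹(X)` and `Φ⁻¹(Y)`
satisfy a monic algebraic relation of degree at most `deg Φ⁻¹(X)`; applying `Φ` turns it into a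
monic multiple of `Φ(X)`. Hence the leading coefficient of `Φ(X)` is a unit, and by symmetry
`deg Φ⁻¹(X) = deg Φ(X)`.

Expanding `Φ(h)` in base `Φ(X)`, each division of `h` by `Φ⁻¹(X)` costs one factor `X`, so the
digits have `X`-degree at most `deg h / b` up to a constant. Applied to powers of `h` this gives
`b · deg_X lc(Φ h) ≤ deg h`. Thus, if `deg h < b`, then `Φ(h)` keeps its degree when `X` is set to
`0`, and a dimension count among the polynomials of degree `< b` yields some `h = Y + c(X)` for
which `deg Φ(h) < b` (if `b = 1`, a scalar multiple of `Φ⁻¹(X)` will do). Since `Φ ∘ φ_c ∘ s` sends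
`X` to `Φ(Y + c(X))`, the degree drops. For `b = 0` the automorphism has the form `X ↦ αX + a`,
`Y ↦ βY + q(X)`, and `X ↦ X + a` is a conjugate of a shear by `s`.
-/

namespace JungVanDerKulk

open Polynomial
open scoped Polynomial.Bivariate

section CommRing

variable {R : Type*} [CommRing R]

theorem exists_monic_aeval_eq_zero [Nontrivial R] {B : Type*} [CommRing B] [Algebra R B]
    [Module.Free R B] [Module.Finite R B] (b : B) :
    ∃ m : R[X], m.Monic ∧ m.natDegree = Module.finrank R B ∧ aeval b m = 0 := by
  refine ⟨(Algebra.lmul R B b).charpoly, LinearMap.charpoly_monic _,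
    LinearMap.charpoly_natDegree _, Algebra.lmul_injective (R := R) ?_⟩
  rw [← aeval_algHom_apply, LinearMap.aeval_self_charpoly, map_zero]

theorem exists_monic_aevalAeval_eq_zero {u : R[X]} (hu : 0 < u.natDegree)
    (hlead : IsUnit u.leadingCoeff) (v : R[X]) :
    ∃ m : R[X][Y], m.Monic ∧ m.natDegree = u.natDegree ∧ aevalAeval u v m = 0 := by
  have : Nontrivial R := Nontrivial.of_polynomial_ne (ne_zero_of_natDegree_gt hu)
  obtain ⟨l, hl⟩ := hlead.exists_left_inv
  -- `m` is the characteristic polynomial of multiplication by `v` on `R[T]`, regarded as the free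
  -- `R[x]`-module `R[x][T] / (u(T) - x)`.
  let g : R[X][X] := C (C l) * (u.map C - C X)
  have hdeg : (u.map C - C X : R[X][X]).natDegree = u.natDegree := by
    rw [natDegree_sub_C, natDegree_map_eq_of_injective C_injective]
  have hmonic : g.Monic := monic_C_mul_of_mul_leadingCoeff_eq_one <| by
    rw [leadingCoeff, hdeg, coeff_sub, coeff_map, coeff_C_of_ne_zero hu.ne', sub_zero, ← C_mul,
      coeff_natDegree, hl, C_1]
  have hgdeg : g.natDegree = u.natDegree := by
    rw [natDegree_C_mul_of_isUnit ((IsUnit.of_mul_eq_one _ hl).map C), hdeg]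
  have := hmonic.free_adjoinRoot
  have := hmonic.finite_adjoinRoot
  let root : AdjoinRoot g := AdjoinRoot.mk g (v.map C)
  obtain ⟨m, hm, hmdeg, hroot⟩ := exists_monic_aeval_eq_zero (R := R[X]) root
  refine ⟨m, hm, ?_, ?_⟩
  · rw [hmdeg, (AdjoinRoot.powerBasis' hmonic).finrank, AdjoinRoot.powerBasis'_dim, hgdeg]
  · have hmapC (w : R[X]) : (w.map C).eval₂ (aeval u : R[X] →ₐ[R] R[X]) X = w := by
      have : ((aeval u : R[X] →ₐ[R] R[X]) : R[X] →+* R[X]).comp C = C := by ext1; simp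
      rw [eval₂_map, this, eval₂_C_X]
    let φ : AdjoinRoot g →ₐ[R] R[X] := AdjoinRoot.liftAlgHom g (aeval u) X <| by
      rw [eval₂_mul, eval₂_sub, hmapC, eval₂_C, eval₂_C, RingHom.coe_coe, aeval_X,
        sub_self, mul_zero]
    have : aevalAeval u v = φ.comp ((aeval root).restrictScalars R) := by
      ext
      · simp [φ]
      · simp [φ, root, hmapC]
    simp [this, hroot]

theorem exists_eq_mul_add_of_isUnit_leadingCoeff {f : R[X]} (hf : 0 < f.natDegree)
    (hlead : IsUnit f.leadingCoeff) (h : R[X]) :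
    ∃ q r : R[X], h = f * q + r ∧ r.natDegree < f.natDegree ∧
      q.natDegree = h.natDegree - f.natDegree := by
  have : Nontrivial R := Nontrivial.of_polynomial_ne (ne_zero_of_natDegree_gt hf)
  obtain ⟨l, hl⟩ := hlead.exists_left_inv
  have hmonic : (C l * f).Monic := monic_C_mul_of_mul_leadingCoeff_eq_one hl
  have hunit : IsUnit l := IsUnit.of_mul_eq_one _ hl
  have hdeg : (C l * f).natDegree = f.natDegree := natDegree_C_mul_of_isUnit hunit f
  refine ⟨C l * (h /ₘ (C l * f)), h %ₘ (C l * f), ?_, ?_, ?_⟩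
  · rw [← mul_assoc, mul_comm f, add_comm, modByMonic_add_div]
  · rw [← hdeg]
    exact natDegree_modByMonic_lt _ hmonic (by rintro h1; rw [h1, natDegree_one] at hdeg; omega)
  · rw [natDegree_C_mul_of_isUnit hunit, natDegree_divByMonic _ hmonic, hdeg]

theorem mem_degreeLT_iff_natDegree_lt {q : R[X]} {n : ℕ} (hn : 0 < n) :
    q ∈ degreeLT R n ↔ q.natDegree < n := by
  rcases eq_or_ne q 0 with rfl | hq
  · simp [hn]
  · rw [mem_degreeLT, natDegree_lt_iff_degree_lt hq]

/-- Reduction modulo `X`, that is, the substitution `X ↦ 0`. -/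
def modX : R[X][Y] →ₐ[R] R[X] := mapAlgHom (aeval 0)

theorem coeff_modX (z : R[X][Y]) (n : ℕ) : (modX z).coeff n = (z.coeff n).coeff 0 := by
  simp [modX, coeff_zero_eq_aeval_zero]

theorem modX_eq_zero_iff {z : R[X][Y]} : modX z = 0 ↔ C X ∣ z := by
  simp [C_dvd_iff_dvd_coeff, X_dvd_iff, Polynomial.ext_iff, coeff_modX]

theorem modX_C (c : R[X]) : modX (C c) = C (c.coeff 0) := by
  simp [modX, coeff_zero_eq_aeval_zero]

theorem modX_map_C (q : R[X]) : modX (q.map C) = q := by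
  ext n
  simp [coeff_modX]

theorem algHom_ext {A : Type*} [CommRing A] [Algebra R A] {φ ψ : R[X][Y] →ₐ[R] A}
    (hX : φ (C X) = ψ (C X)) (hY : φ Y = ψ Y) : φ = ψ := by
  ext <;> simp [hX, hY]

theorem modX_apply (Φ : R[X][Y] →ₐ[R] R[X][Y]) (z : R[X][Y]) :
    modX (Φ z) = aevalAeval (modX (Φ (C X))) (modX (Φ Y)) z := by
  have : modX.comp Φ = aevalAeval (modX (Φ (C X))) (modX (Φ Y)) :=
    algHom_ext (by simp) (by simp)
  exact DFunLike.congr_fun this z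

theorem natDegree_modX_le (z : R[X][Y]) : (modX z).natDegree ≤ z.natDegree :=
  natDegree_map_le

theorem leadingCoeff_eq_C_coeff_modX {z : R[X][Y]} (hz : z.leadingCoeff.natDegree = 0) :
    z.leadingCoeff = C ((modX z).coeff z.natDegree) := by
  rw [coeff_modX]
  exact eq_C_of_natDegree_eq_zero hz

theorem eq_zero_of_modX_eq_zero {z : R[X][Y]} (hz : z.leadingCoeff.natDegree = 0)
    (hmod : modX z = 0) : z = 0 := by
  rw [← leadingCoeff_eq_zero, leadingCoeff_eq_C_coeff_modX hz, hmod, coeff_zero, C_0]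

theorem natDegree_modX {z : R[X][Y]} (hz : z.leadingCoeff.natDegree = 0) :
    (modX z).natDegree = z.natDegree := by
  rcases eq_or_ne z 0 with rfl | hne
  · simp
  · refine (natDegree_modX_le z).antisymm (le_natDegree_of_ne_zero fun hcoeff ↦ hne ?_)
    rw [← leadingCoeff_eq_zero, leadingCoeff_eq_C_coeff_modX hz, hcoeff, C_0]

/-- All digits of `w` in base `p` have `Y`-degree less than that of `p` and `X`-degree at most `M`;
the digits are produced by `w = p * q + r`, where `r` is the lowest one. -/
inductive DigitDegreeLE (p : R[X][Y]) (M : ℕ) : R[X][Y] → Prop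
  | zero : DigitDegreeLE p M 0
  | step {q r : R[X][Y]} (hq : DigitDegreeLE p M q) (hdeg : r.natDegree < p.natDegree)
      (hcoeff : ∀ n, (r.coeff n).natDegree ≤ M) : DigitDegreeLE p M (p * q + r)

namespace DigitDegreeLE

variable {p w z : R[X][Y]} {M N : ℕ}

theorem mono (hMN : M ≤ N) (hw : DigitDegreeLE p M w) : DigitDegreeLE p N w := by
  induction hw with
  | zero => exact zero
  | step _ hdeg hcoeff ih => exact ih.step hdeg fun n ↦ (hcoeff n).trans hMN

theorem of_natDegree_lt (hdeg : w.natDegree < p.natDegree)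
    (hcoeff : ∀ n, (w.coeff n).natDegree ≤ M) :
    DigitDegreeLE p M w := by
  simpa using zero.step hdeg hcoeff

theorem add (hw : DigitDegreeLE p M w) (hz : DigitDegreeLE p M z) : DigitDegreeLE p M (w + z) := by
  induction hw generalizing z with
  | zero => rwa [zero_add]
  | @step q r hq hdeg hcoeff ih =>
    cases hz with
    | zero => simpa using hq.step hdeg hcoeff
    | @step q' r' hq' hdeg' hcoeff' =>
      rw [add_add_add_comm, ← mul_add]
      exact (ih hq').step ((natDegree_add_le _ _).trans_lt (max_lt hdeg hdeg')) fun n ↦ by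
        rw [coeff_add]
        exact natDegree_add_le_of_degree_le (hcoeff n) (hcoeff' n)

theorem sum {ι : Type*} {s : Finset ι} {w : ι → R[X][Y]} (hw : ∀ i ∈ s, DigitDegreeLE p M (w i)) :
    DigitDegreeLE p M (∑ i ∈ s, w i) :=
  Finset.sum_induction _ _ (fun _ _ ↦ add) zero hw

theorem C_mul (hw : DigitDegreeLE p M w) (c : R[X]) :
    DigitDegreeLE p (M + c.natDegree) (C c * w) := by
  induction hw with
  | zero => simpa using zero
  | step _ hdeg hcoeff ih =>
    rw [mul_add, mul_left_comm]
    refine ih.step ((natDegree_C_mul_le _ _).trans_lt hdeg) fun n ↦ ?_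
    rw [coeff_C_mul, add_comm]
    exact natDegree_mul_le_of_le le_rfl (hcoeff n)

theorem pow_mul (hpos : 0 < p.natDegree) (hw : DigitDegreeLE p M w) (n : ℕ) :
    DigitDegreeLE p M (p ^ n * w) := by
  induction n with
  | zero => simpa
  | succ n ih =>
    rw [pow_succ', mul_assoc, ← add_zero (p * _)]
    exact ih.step (by simpa) (by simp)

theorem aeval_mul (hpos : 0 < p.natDegree) (hw : DigitDegreeLE p M w) (c : R[X]) :
    DigitDegreeLE p M (aeval p c * w) := by
  induction c using Polynomial.induction_on' with
  | add c d hc hd => simpa [add_mul] using hc.add hd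
  | monomial n a =>
    simpa [aeval_monomial, mul_assoc, IsScalarTower.algebraMap_apply R R[X] R[X][Y]]
      using (hw.pow_mul hpos n).C_mul (C a)

theorem natDegree_leadingCoeff_le [IsDomain R] (hunit : IsUnit p.leadingCoeff)
    (hw : DigitDegreeLE p M w) : w.leadingCoeff.natDegree ≤ M := by
  induction hw with
  | zero => simp
  | @step q r _ hdeg hcoeff ih =>
    rcases eq_or_ne q 0 with rfl | hq
    · simpa using hcoeff r.natDegree
    · have hp : p ≠ 0 := leadingCoeff_ne_zero.mp hunit.ne_zero
      have hlt : r.degree < (p * q).degree := degree_lt_degree <| by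
        rw [natDegree_mul hp hq]
        omega
      rw [leadingCoeff_add_of_degree_lt' hlt, leadingCoeff_mul,
        natDegree_mul hunit.ne_zero (leadingCoeff_ne_zero.mpr hq),
        natDegree_eq_zero_of_isUnit hunit, zero_add]
      exact ih

end DigitDegreeLE

theorem exists_digitDegreeLE {p : R[X][Y]} (hpos : 0 < p.natDegree)
    (hunit : IsUnit p.leadingCoeff) (w : R[X][Y]) : ∃ M, DigitDegreeLE p M w := by
  induction h : w.natDegree using Nat.strong_induction_on generalizing w with
  | _ n ih =>
    have exists_bound (r : R[X][Y]) : ∃ M, ∀ n, (r.coeff n).natDegree ≤ M := by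
      refine ⟨r.support.sup fun n ↦ (r.coeff n).natDegree, fun n ↦ ?_⟩
      by_cases hn : n ∈ r.support
      · exact Finset.le_sup (f := fun n ↦ (r.coeff n).natDegree) hn
      · simp [notMem_support_iff.mp hn]
    obtain ⟨q, r, rfl, hr, hq⟩ := exists_eq_mul_add_of_isUnit_leadingCoeff hpos hunit w
    obtain ⟨M, hM⟩ := exists_bound r
    by_cases hn : q.natDegree < n
    · obtain ⟨N, hN⟩ := ih _ hn q rfl
      exact ⟨max M N, (hN.mono (le_max_right M N)).step hr fun k ↦ (hM k).trans (le_max_left M N)⟩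
    · obtain ⟨N, hN⟩ := exists_bound (p * q + r)
      exact ⟨N, .of_natDegree_lt (by omega) hN⟩

theorem exists_digitDegreeLE_forall {ι : Type*} {p : R[X][Y]} (hpos : 0 < p.natDegree)
    (hunit : IsUnit p.leadingCoeff) (s : Finset ι) (w : ι → R[X][Y]) :
    ∃ M, ∀ i ∈ s, DigitDegreeLE p M (w i) := by
  choose M hM using fun i ↦ exists_digitDegreeLE hpos hunit (w i)
  exact ⟨s.sup M, fun i hi ↦ (hM i).mono (Finset.le_sup hi)⟩

theorem aeval_C_X (c : R[X]) : aeval (C X : R[X][Y]) c = C c := by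
  simpa [aeval_X_left_apply] using aeval_algebraMap_apply R[X][Y] (X : R[X]) c

theorem map_C_eq_aeval (Φ : R[X][Y] →ₐ[R] R[X][Y]) (c : R[X]) : Φ (C c) = aeval (Φ (C X)) c := by
  rw [aeval_algHom_apply, aeval_C_X]

section

variable {Φ : R[X][Y] →ₐ[R] R[X][Y]} {f : R[X][Y]}

theorem exists_digitDegreeLE_apply (hpos : 0 < (Φ (C X)).natDegree)
    (hunit : IsUnit (Φ (C X)).leadingCoeff) (hf : Φ f = C X) (hfpos : 0 < f.natDegree)
    (hfunit : IsUnit f.leadingCoeff) :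
    ∃ A, ∀ h, DigitDegreeLE (Φ (C X)) (h.natDegree / f.natDegree + A) (Φ h) := by
  obtain ⟨A, hA⟩ := exists_digitDegreeLE_forall hpos hunit (Finset.range f.natDegree) (Φ Y ^ ·)
  have digit_of_lt {r : R[X][Y]} (hr : r.natDegree < f.natDegree) :
      DigitDegreeLE (Φ (C X)) A (Φ r) := by
    rw [as_sum_range_C_mul_X_pow' r hr, map_sum]
    refine .sum fun i hi ↦ ?_
    rw [map_mul, map_pow, map_C_eq_aeval Φ (r.coeff i)]
    exact (hA i hi).aeval_mul hpos _
  refine ⟨A, fun h ↦ ?_⟩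
  induction hn : h.natDegree using Nat.strong_induction_on generalizing h with
  | _ n ih =>
    by_cases hlt : h.natDegree < f.natDegree
    · exact (digit_of_lt hlt).mono (Nat.le_add_left _ _)
    · obtain ⟨q, r, rfl, hr, hq⟩ := exists_eq_mul_add_of_isUnit_leadingCoeff hfpos hfunit h
      have hdiv : n / f.natDegree = q.natDegree / f.natDegree + 1 := by
        rw [← Nat.add_div_right _ hfpos]
        congr 1
        omega
      have hΦq := (ih q.natDegree (by omega) q rfl).C_mul X
      rw [map_add, map_mul, hf, hdiv]
      refine (hΦq.mono ?_).add ((digit_of_lt hr).mono (Nat.le_add_left _ _))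
      have := natDegree_X_le (R := R)
      omega

theorem mul_natDegree_leadingCoeff_apply_le [IsDomain R] (hpos : 0 < (Φ (C X)).natDegree)
    (hunit : IsUnit (Φ (C X)).leadingCoeff) (hf : Φ f = C X) (hfpos : 0 < f.natDegree)
    (hfunit : IsUnit f.leadingCoeff) (h : R[X][Y]) :
    f.natDegree * (Φ h).leadingCoeff.natDegree ≤ h.natDegree := by
  obtain ⟨A, hA⟩ := exists_digitDegreeLE_apply hpos hunit hf hfpos hfunit
  -- The additive error `A` disappears when the digit bound is applied to large powers of `h`.
  have key (k : ℕ) : f.natDegree * k * (Φ h).leadingCoeff.natDegree ≤ k * h.natDegree + A := by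
    have := (hA (h ^ (f.natDegree * k))).natDegree_leadingCoeff_le hunit
    rwa [map_pow, leadingCoeff_pow, natDegree_pow, natDegree_pow,
      mul_assoc f.natDegree k h.natDegree, Nat.mul_div_cancel_left _ hfpos] at this
  nlinarith [key (A + 1)]

end

end CommRing

section Automorphisms

variable {R : Type*} [CommRing R]

theorem apply_C_C (Φ : R[X][Y] ≃ₐ[R] R[X][Y]) (a : R) : Φ (C (C a)) = C (C a) :=
  Φ.commutes a

theorem apply_C_eq_C_comp {Φ : R[X][Y] ≃ₐ[R] R[X][Y]} {r : R[X]} (hΦ : Φ (C X) = C r) (c : R[X]) :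
    Φ (C c) = C (c.comp r) := by
  refine (map_C_eq_aeval (Φ : R[X][Y] →ₐ[R] R[X][Y]) c).trans ?_
  rw [AlgEquiv.coe_toAlgHom, hΦ]
  exact aeval_algebraMap_apply R[X][Y] r c

theorem algEquiv_ext {Φ Θ : R[X][Y] ≃ₐ[R] R[X][Y]} (hX : Φ (C X) = Θ (C X)) (hY : Φ Y = Θ Y) :
    Φ = Θ :=
  AlgEquiv.coe_toAlgHom_injective (algHom_ext hX hY)

/-- The shear `φ_f : X ↦ X, Y ↦ Y + f(X)`. -/
def shear (f : R[X]) : R[X][Y] ≃ₐ[R] R[X][Y] :=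
  .ofAlgHom (aevalAeval (C X) (Y + C f)) (aevalAeval (C X) (Y - C f))
    (by ext <;> simp [aeval_C_X])
    (by ext <;> simp [aeval_C_X])

/-- The rotation `s : X ↦ Y, Y ↦ -X`. -/
def rotation : R[X][Y] ≃ₐ[R] R[X][Y] :=
  .ofAlgHom (aevalAeval (Y : R[X][Y]) (-C (X : R[X]))) (aevalAeval (-(Y : R[X][Y])) (C X))
    (by ext <;> simp) (by ext <;> simp)

theorem C_C_mul_C_C_mul_cancel {a b : R} (hab : a * b = 1) (z : R[X][Y]) :
    C (C a) * (C (C b) * z) = z := by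
  rw [← mul_assoc, ← C_mul, ← C_mul, hab, C_1, C_1, one_mul]

/-- The diagonal automorphism `X ↦ αX, Y ↦ βY`; both `γ_μ` and `t_ν` are of this kind. -/
def diagonal (α β : Rˣ) : R[X][Y] ≃ₐ[R] R[X][Y] :=
  .ofAlgHom (aevalAeval (C (C (α : R)) * C X) (C (C (β : R)) * Y))
    (aevalAeval (C (C ((α⁻¹ : Rˣ) : R)) * C X) (C (C ((β⁻¹ : Rˣ) : R)) * Y))
    (algHom_ext (by simp [C_C_mul_C_C_mul_cancel]) (by simp [C_C_mul_C_C_mul_cancel]))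
    (algHom_ext (by simp [C_C_mul_C_C_mul_cancel]) (by simp [C_C_mul_C_C_mul_cancel]))

@[simp] theorem shear_apply_C_X (f : R[X]) : shear f (C X) = C X := by simp [shear]

@[simp] theorem shear_apply_Y (f : R[X]) : shear f Y = Y + C f := by simp [shear]

@[simp] theorem rotation_apply_C_X : rotation (C X : R[X][Y]) = Y := by simp [rotation]

@[simp] theorem rotation_apply_Y : rotation (Y : R[X][Y]) = -C (X : R[X]) := by simp [rotation]

@[simp] theorem diagonal_apply_C_X (α β : Rˣ) : diagonal α β (C X) = C (C (α : R)) * C X := by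
  simp [diagonal]

@[simp] theorem diagonal_apply_Y (α β : Rˣ) : diagonal α β Y = C (C (β : R)) * Y := by
  simp [diagonal]

@[simp] theorem shear_apply_C (f c : R[X]) : shear f (C c) = C c := by
  rw [apply_C_eq_C_comp (shear_apply_C_X f), comp_X]

theorem diagonal_apply_C (α β : Rˣ) (c : R[X]) :
    diagonal α β (C c) = C (c.comp (C (α : R) * X)) :=
  apply_C_eq_C_comp (by rw [diagonal_apply_C_X, C_mul]) c

theorem shear_mul_shear (f g : R[X]) : shear f * shear g = shear (f + g) :=
  algEquiv_ext (by simp) (by simp [add_assoc])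

theorem shear_zero : shear (0 : R[X]) = 1 := algEquiv_ext (by simp) (by simp)

theorem shear_inv (f : R[X]) : (shear f)⁻¹ = shear (-f) := by
  rw [inv_eq_iff_mul_eq_one, shear_mul_shear, add_neg_cancel, shear_zero]

theorem rotation_inv : (rotation : R[X][Y] ≃ₐ[R] R[X][Y])⁻¹ = rotation * rotation * rotation := by
  rw [inv_eq_iff_mul_eq_one]
  exact algEquiv_ext (by simp) (by simp)

theorem diagonal_mul_diagonal (α β α' β' : Rˣ) :
    diagonal α β * diagonal α' β' = diagonal (α * α') (β * β') :=
  algEquiv_ext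
    (by simp only [AlgEquiv.mul_apply, diagonal_apply_C_X, map_mul, apply_C_C, Units.val_mul]; ring)
    (by simp only [AlgEquiv.mul_apply, diagonal_apply_Y, map_mul, apply_C_C, Units.val_mul]; ring)

/-- The subgroup generated by the rotation `s` and the shears `φ_f`. -/
def elementarySubgroup (R : Type*) [CommRing R] : Subgroup (R[X][Y] ≃ₐ[R] R[X][Y]) :=
  Subgroup.closure (insert rotation (Set.range shear))

theorem rotation_mem_elementarySubgroup : rotation ∈ elementarySubgroup R :=
  Subgroup.subset_closure (Set.mem_insert _ _)

theorem shear_mem_elementarySubgroup (f : R[X]) : shear f ∈ elementarySubgroup R :=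
  Subgroup.subset_closure (Set.mem_insert_of_mem _ ⟨f, rfl⟩)

/-- The `k`-th factor of the word `φ_{f₀} ∘ s ∘ φ_{f₁} ∘ s ∘ ⋯`: the shear by `fs (k / 2)` for even
`k`, the rotation for odd `k`. -/
def letter (fs : ℕ → R[X]) (k : ℕ) : R[X][Y] ≃ₐ[R] R[X][Y] :=
  if Even k then shear (fs (k / 2)) else rotation

/-- The word `φ_{f₀} ∘ s ∘ φ_{f₁} ∘ s ∘ ⋯ ∘ s ∘ φ_{fₙ}`, with `n + 1` shears. -/
def word (fs : ℕ → R[X]) (n : ℕ) : R[X][Y] ≃ₐ[R] R[X][Y] :=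
  ((List.range (2 * n + 1)).map (letter fs)).prod

theorem letter_two_mul (fs : ℕ → R[X]) (k : ℕ) : letter fs (2 * k) = shear (fs k) := by
  simp [letter]

theorem letter_two_mul_add_one (fs : ℕ → R[X]) (k : ℕ) : letter fs (2 * k + 1) = rotation := by
  simp [letter]

theorem word_zero (fs : ℕ → R[X]) : word fs 0 = shear (fs 0) := by
  simp [word, letter]

theorem word_succ (fs : ℕ → R[X]) (n : ℕ) :
    word fs (n + 1) = word fs n * rotation * shear (fs (n + 1)) := by
  rw [← letter_two_mul_add_one fs n, ← letter_two_mul fs (n + 1), word, mul_add_one,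
    List.range_succ, List.range_succ, List.map_append, List.map_append, List.prod_append,
    List.prod_append, List.map_singleton, List.map_singleton, List.prod_singleton,
    List.prod_singleton, word]

theorem word_congr {fs gs : ℕ → R[X]} {n : ℕ} (h : ∀ k ≤ n, fs k = gs k) :
    word fs n = word gs n := by
  refine congrArg List.prod (List.map_congr_left fun k hk ↦ ?_)
  rw [letter, letter, h (k / 2) (by have := List.mem_range.1 hk; omega)]

theorem exists_word_eq_word_mul_rotation (fs : ℕ → R[X]) (n : ℕ) :
    ∃ gs, word gs (n + 1) = word fs n * rotation := by
  refine ⟨Function.update fs (n + 1) 0, ?_⟩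
  rw [word_succ, Function.update_self, shear_zero, mul_one,
    word_congr fun k hk ↦ Function.update_of_ne (by omega) 0 fs]

theorem exists_word_eq_word_mul_shear (fs : ℕ → R[X]) (n : ℕ) (f : R[X]) :
    ∃ gs, word gs n = word fs n * shear f := by
  refine ⟨Function.update fs n (fs n + f), ?_⟩
  cases n with
  | zero => simp only [word_zero, Function.update_self, shear_mul_shear]
  | succ n =>
    rw [word_succ, word_succ, Function.update_self, mul_assoc _ _ (shear f), shear_mul_shear,
      word_congr fun k hk ↦ Function.update_of_ne (by omega) _ fs]

theorem exists_word_eq_of_mem_elementarySubgroup {τ : R[X][Y] ≃ₐ[R] R[X][Y]}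
    (hτ : τ ∈ elementarySubgroup R) : ∃ fs n, word fs n = τ := by
  have mul_rotation {τ : R[X][Y] ≃ₐ[R] R[X][Y]} (h : ∃ fs n, word fs n = τ) :
      ∃ fs n, word fs n = τ * rotation := by
    obtain ⟨fs, n, rfl⟩ := h
    obtain ⟨gs, hgs⟩ := exists_word_eq_word_mul_rotation fs n
    exact ⟨gs, n + 1, hgs⟩
  have mul_shear {τ : R[X][Y] ≃ₐ[R] R[X][Y]} (f : R[X]) (h : ∃ fs n, word fs n = τ) :
      ∃ fs n, word fs n = τ * shear f := by
    obtain ⟨fs, n, rfl⟩ := h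
    obtain ⟨gs, hgs⟩ := exists_word_eq_word_mul_shear fs n f
    exact ⟨gs, n, hgs⟩
  induction hτ using Subgroup.closure_induction_right with
  | one => exact ⟨0, 0, by rw [word_zero, Pi.zero_apply, shear_zero]⟩
  | mul_right τ _ ρ hρ ih =>
    obtain rfl | ⟨f, rfl⟩ := hρ
    · exact mul_rotation ih
    · exact mul_shear f ih
  | mul_inv_cancel τ _ ρ hρ ih =>
    obtain rfl | ⟨f, rfl⟩ := hρ
    · rw [rotation_inv, ← mul_assoc, ← mul_assoc]
      exact mul_rotation (mul_rotation (mul_rotation ih))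
    · rw [shear_inv]
      exact mul_shear _ ih

theorem eq_C_mul_X_add_C_of_comp_eq_X [IsDomain R] {p q : R[X]} (h : p.comp q = X) :
    ∃ (a : Rˣ) (b : R), q = C (a : R) * X + C b := by
  have hdeg : p.natDegree * q.natDegree = 1 := by rw [← natDegree_comp, h, natDegree_X]
  have hp := Nat.eq_one_of_mul_eq_one_right hdeg
  have hq := Nat.eq_one_of_mul_eq_one_left hdeg
  have hlead : p.leadingCoeff * q.leadingCoeff = 1 := by
    rw [← pow_one q.leadingCoeff, ← hp, ← leadingCoeff_comp (by omega), h, leadingCoeff_X]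
  refine ⟨Units.mkOfMulEqOne _ _ ((mul_comm _ _).trans hlead), q.coeff 0, ?_⟩
  rw [Units.val_mkOfMulEqOne, leadingCoeff, hq]
  exact eq_X_add_C_of_natDegree_le_one hq.le

theorem apply_eq_comp {Φ : R[X][Y] ≃ₐ[R] R[X][Y]} {r : R[X]} (hΦ : Φ (C X) = C r) (z : R[X][Y]) :
    Φ z = (z.map (compRingHom r)).comp (Φ Y) := by
  induction z using Polynomial.induction_on' with
  | add p q hp hq => simp [hp, hq]
  | monomial n a => simp [← C_mul_X_pow_eq_monomial, apply_C_eq_C_comp hΦ]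

theorem exists_apply_eq_of_natDegree_eq_zero [IsDomain R] {Φ : R[X][Y] ≃ₐ[R] R[X][Y]}
    (h : (Φ (C X)).natDegree = 0) (hsymm : (Φ.symm (C X)).natDegree = 0) :
    ∃ (α β : Rˣ) (a : R) (q : R[X]), Φ (C X) = C (C (α : R) * X + C a) ∧
      Φ Y = C (C (β : R)) * Y + C q := by
  obtain ⟨r, hr⟩ := natDegree_eq_zero.1 h
  obtain ⟨r', hr'⟩ := natDegree_eq_zero.1 hsymm
  have hcomp : r'.comp r = X := by
    have := apply_eq_comp hr.symm (C r')
    rw [map_C, C_comp, hr', Φ.apply_symm_apply] at this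
    exact (C_injective this).symm
  have hcompY : ((Φ.symm Y).map (compRingHom r)).comp (Φ Y) = X := by
    rw [← apply_eq_comp hr.symm, Φ.apply_symm_apply]
  obtain ⟨α, a, rfl⟩ := eq_C_mul_X_add_C_of_comp_eq_X hcomp
  obtain ⟨γ, q, hΦY⟩ := eq_C_mul_X_add_C_of_comp_eq_X hcompY
  obtain ⟨_, ⟨β, rfl⟩, hβ⟩ := isUnit_iff.1 γ.isUnit
  exact ⟨α, β, a, q, hr.symm, by rw [hΦY, hβ]⟩

theorem exists_mem_elementarySubgroup_apply_C_X_eq (a : R) :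
    ∃ τ ∈ elementarySubgroup R, τ (C X) = C (X + C a) ∧ τ Y = Y := by
  refine ⟨rotation⁻¹ * shear (C a) * rotation, mul_mem (mul_mem
    (inv_mem rotation_mem_elementarySubgroup) (shear_mem_elementarySubgroup _))
    rotation_mem_elementarySubgroup, ?_, ?_⟩
  · rw [AlgEquiv.mul_apply, rotation_apply_C_X, AlgEquiv.mul_apply, shear_apply_Y, map_add,
      apply_C_C, C_add, rotation_inv]
    simp
  · rw [AlgEquiv.mul_apply, rotation_apply_Y, AlgEquiv.mul_apply, map_neg, shear_apply_C_X,
      rotation_inv]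
    simp

theorem exists_eq_diagonal_mul_of_natDegree_eq_zero [IsDomain R] {Φ : R[X][Y] ≃ₐ[R] R[X][Y]}
    (h : (Φ (C X)).natDegree = 0) (hsymm : (Φ.symm (C X)).natDegree = 0) :
    ∃ (α β : Rˣ), ∃ τ ∈ elementarySubgroup R, Φ = diagonal α β * τ := by
  obtain ⟨α, β, a, q, hX, hY⟩ := exists_apply_eq_of_natDegree_eq_zero h hsymm
  obtain ⟨τ, hτ, hτX, hτY⟩ := exists_mem_elementarySubgroup_apply_C_X_eq a
  refine ⟨α, β, shear (q.comp (C ((α⁻¹ : Rˣ) : R) * X)) * τ,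
    mul_mem (shear_mem_elementarySubgroup _) hτ, algEquiv_ext ?_ ?_⟩
  · simp [hX, hτX, apply_C_C]
  · rw [hY, AlgEquiv.mul_apply, AlgEquiv.mul_apply, hτY, shear_apply_Y, map_add, diagonal_apply_Y,
      diagonal_apply_C, comp_assoc, mul_comp, C_comp, X_comp, ← mul_assoc, ← C_mul,
      Units.inv_mul, C_1, one_mul, comp_X]

/-- The transport of automorphisms of `R[X][Y]` to `MvPolynomial (Fin 2) R`, with `X` and `Y`
corresponding to the variables `0` and `1`. -/
def autMvPolynomial (R : Type*) [CommRing R] :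
    (R[X][Y] ≃ₐ[R] R[X][Y]) ≃* (MvPolynomial (Fin 2) R ≃ₐ[R] MvPolynomial (Fin 2) R) :=
  AlgEquiv.autCongr (Bivariate.equivMvPolynomial R)

theorem autMvPolynomial_apply_X_zero (Φ : R[X][Y] ≃ₐ[R] R[X][Y]) :
    autMvPolynomial R Φ (.X 0) = Bivariate.equivMvPolynomial R (Φ (C X)) := by
  simp [autMvPolynomial, AlgEquiv.autCongr_apply]

theorem autMvPolynomial_apply_X_one (Φ : R[X][Y] ≃ₐ[R] R[X][Y]) :
    autMvPolynomial R Φ (.X 1) = Bivariate.equivMvPolynomial R (Φ Y) := by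
  simp [autMvPolynomial, AlgEquiv.autCongr_apply]

theorem equivMvPolynomial_C (f : R[X]) :
    Bivariate.equivMvPolynomial R (C f) = aeval (.X 0) f := by
  rw [← aeval_C_X, ← aeval_algHom_apply, Bivariate.equivMvPolynomial_C_X]

end Automorphisms

section Field

variable {K : Type*} [Field K]

theorem natDegree_apply_C_X_eq_zero_or_exists_monic_dvd (Φ : K[X][Y] ≃ₐ[K] K[X][Y]) :
    (Φ (C X)).natDegree = 0 ∨
      ∃ m : K[X][Y], m.Monic ∧ m.natDegree ≤ (Φ.symm (C X)).natDegree ∧ Φ (C X) ∣ m := by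
  have dvd_of_relation {m : K[X][Y]} (hm : modX (Φ.symm m) = 0) : Φ (C X) ∣ m := by
    simpa using map_dvd Φ (modX_eq_zero_iff.mp hm)
  rcases (modX (Φ.symm (C X))).natDegree.eq_zero_or_pos with hconst | hpos
  · left
    obtain ⟨c, hc⟩ := natDegree_eq_zero.mp hconst
    have hdvd : Φ (C X) ∣ C (X - C c) := dvd_of_relation <| by
      rw [C_sub, map_sub, map_sub, ← hc, apply_C_C, modX_C, coeff_C_zero, sub_self]
    simpa using natDegree_le_of_dvd hdvd (C_ne_zero.mpr (X_sub_C_ne_zero c))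
  · right
    have hlead : IsUnit (modX (Φ.symm (C X))).leadingCoeff :=
      (leadingCoeff_ne_zero.mpr (ne_zero_of_natDegree_gt hpos)).isUnit
    obtain ⟨m, hm, hdeg, hroot⟩ := exists_monic_aevalAeval_eq_zero hpos hlead (modX (Φ.symm Y))
    refine ⟨m, hm, hdeg.trans_le (natDegree_modX_le _), dvd_of_relation ?_⟩
    exact (modX_apply (Φ.symm : K[X][Y] →ₐ[K] K[X][Y]) m).trans hroot

theorem isUnit_leadingCoeff_apply_C_X {Φ : K[X][Y] ≃ₐ[K] K[X][Y]}
    (hpos : 0 < (Φ (C X)).natDegree) : IsUnit (Φ (C X)).leadingCoeff := by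
  obtain h | ⟨m, hm, -, hdvd⟩ := natDegree_apply_C_X_eq_zero_or_exists_monic_dvd Φ
  · omega
  · exact hm.isUnit_leadingCoeff_of_dvd hdvd

theorem natDegree_symm_C_X (Φ : K[X][Y] ≃ₐ[K] K[X][Y]) :
    (Φ.symm (C X)).natDegree = (Φ (C X)).natDegree := by
  have key (Θ : K[X][Y] ≃ₐ[K] K[X][Y]) : (Θ (C X)).natDegree ≤ (Θ.symm (C X)).natDegree := by
    obtain h | ⟨m, hm, hdeg, hdvd⟩ := natDegree_apply_C_X_eq_zero_or_exists_monic_dvd Θ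
    · omega
    · exact (natDegree_le_of_dvd hdvd hm.ne_zero).trans hdeg
  exact (key Φ.symm).antisymm (key Φ)

theorem mul_natDegree_leadingCoeff_equiv_apply_le {Φ : K[X][Y] ≃ₐ[K] K[X][Y]}
    (hpos : 0 < (Φ (C X)).natDegree) (h : K[X][Y]) :
    (Φ (C X)).natDegree * (Φ h).leadingCoeff.natDegree ≤ h.natDegree := by
  have hsymm : 0 < (Φ.symm (C X)).natDegree := (natDegree_symm_C_X Φ).symm ▸ hpos
  rw [← natDegree_symm_C_X Φ]
  exact mul_natDegree_leadingCoeff_apply_le (Φ := (Φ : K[X][Y] →ₐ[K] K[X][Y])) hpos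
    (isUnit_leadingCoeff_apply_C_X hpos) (Φ.apply_symm_apply _) hsymm
    (isUnit_leadingCoeff_apply_C_X hsymm) h

theorem natDegree_leadingCoeff_apply_eq_zero {Φ : K[X][Y] ≃ₐ[K] K[X][Y]} {h : K[X][Y]}
    (hlt : h.natDegree < (Φ (C X)).natDegree) : (Φ h).leadingCoeff.natDegree = 0 := by
  by_contra hne
  have := mul_natDegree_leadingCoeff_equiv_apply_le (Nat.zero_lt_of_lt hlt) h
  have := Nat.le_mul_of_pos_right (Φ (C X)).natDegree (Nat.pos_of_ne_zero hne)
  omega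

theorem exists_monic_apply_eq_C {Φ : K[X][Y] ≃ₐ[K] K[X][Y]} (hpos : 0 < (Φ (C X)).natDegree) :
    ∃ F : K[X][Y], F.Monic ∧ F.natDegree = (Φ (C X)).natDegree ∧ ∃ a : K, Φ F = C (C a * X) := by
  rw [← natDegree_symm_C_X] at *
  obtain ⟨l, hl⟩ := (isUnit_leadingCoeff_apply_C_X hpos).exists_left_inv
  have hunit : IsUnit l := IsUnit.of_mul_eq_one _ hl
  obtain ⟨a, rfl⟩ := natDegree_eq_zero.1 (natDegree_eq_zero_of_isUnit hunit)
  exact ⟨C (C a) * Φ.symm (C X), monic_C_mul_of_mul_leadingCoeff_eq_one hl,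
    natDegree_C_mul_of_isUnit hunit _, a, by rw [map_mul, apply_C_C, Φ.apply_symm_apply, C_mul]⟩

theorem exists_linearMap_modX_apply {Φ : K[X][Y] ≃ₐ[K] K[X][Y]}
    (hpos : 0 < (Φ (C X)).natDegree) :
    ∃ L : K[X] →ₗ[K] K[X][Y],
      ∀ q, modX (Φ (L q)) = q ∧ (L q).natDegree < (Φ (C X)).natDegree := by
  obtain ⟨F, hF, hdeg, a, hΦF⟩ := exists_monic_apply_eq_C hpos
  -- `L q` is the remainder of `Φ⁻¹(q(Y))` modulo `F`; since `X ∣ Φ F`, taking the remainder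
  -- does not affect `modX ∘ Φ`.
  refine ⟨(modByMonicHom F).restrictScalars K ∘ₗ
    ((Φ.symm : K[X][Y] →ₐ[K] K[X][Y]).comp (mapAlgHom CAlgHom)).toLinearMap, fun q ↦ ⟨?_, ?_⟩⟩
  · have hrem : Φ.symm (q.map C) %ₘ F = Φ.symm (q.map C) - F * (Φ.symm (q.map C) /ₘ F) :=
      modByMonic_eq_sub_mul_div _ _
    change modX (Φ (Φ.symm (q.map C) %ₘ F)) = q
    rw [hrem, map_sub, map_sub, map_mul, map_mul, hΦF, Φ.apply_symm_apply, modX_map_C, modX_C]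
    simp
  · rw [← hdeg]
    exact natDegree_modByMonic_lt _ hF fun h ↦ by simp [← hdeg, h] at hpos

theorem exists_modX_eq_natDegree_apply_lt {Φ : K[X][Y] ≃ₐ[K] K[X][Y]} {g : K[X]}
    (hg : g.natDegree < (Φ (C X)).natDegree) :
    ∃ h, modX h = g ∧ (Φ h).natDegree < (Φ (C X)).natDegree ∧ h.leadingCoeff.natDegree = 0 := by
  set b := (Φ (C X)).natDegree with hb
  have hpos : 0 < b := Nat.zero_lt_of_lt hg
  obtain ⟨L, hL⟩ := exists_linearMap_modX_apply (hb ▸ hpos)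
  have mem_iff (q : K[X]) := mem_degreeLT_iff_natDegree_lt (q := q) hpos
  have natDegree_apply_lt {q : K[X]} (hq : q ∈ degreeLT K b) : (Φ (L q)).natDegree < b := by
    rw [← natDegree_modX (natDegree_leadingCoeff_apply_eq_zero (hL q).2), (hL q).1]
    exact (mem_iff q).1 hq
  have natDegree_leadingCoeff {q : K[X]} (hq : q ∈ degreeLT K b) :
      (L q).leadingCoeff.natDegree = 0 := by
    rw [← Φ.symm_apply_apply (L q)]
    exact natDegree_leadingCoeff_apply_eq_zero <| by
      rw [natDegree_symm_C_X]
      exact natDegree_apply_lt hq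
  let T : K[X] →ₗ[K] K[X] := modX.toLinearMap ∘ₗ L
  have mapsTo (q) (_ : q ∈ degreeLT K b) : T q ∈ degreeLT K b :=
    (mem_iff _).2 ((natDegree_modX_le _).trans_lt (hL q).2)
  have injOn : Set.InjOn T (degreeLT K b) := by
    refine LinearMap.injOn_of_disjoint_ker subset_rfl (LinearMap.disjoint_ker.2 fun q hq hTq ↦ ?_)
    rw [← (hL q).1, eq_zero_of_modX_eq_zero (natDegree_leadingCoeff hq) hTq, map_zero, map_zero]
  obtain ⟨q, hq, rfl⟩ := (LinearMap.injOn_iff_surjOn mapsTo).1 injOn ((mem_iff g).2 hg)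
  exact ⟨L q, rfl, natDegree_apply_lt hq, natDegree_leadingCoeff hq⟩

theorem exists_natDegree_apply_Y_add_C_lt {Φ : K[X][Y] ≃ₐ[K] K[X][Y]}
    (hpos : 0 < (Φ (C X)).natDegree) :
    ∃ c : K[X], (Φ (Y + C c)).natDegree < (Φ (C X)).natDegree := by
  obtain ⟨h, hmonic, hdeg, hlt⟩ :
      ∃ h : K[X][Y], h.Monic ∧ h.natDegree = 1 ∧ (Φ h).natDegree < (Φ (C X)).natDegree := by
    obtain h1 | h1 : (Φ (C X)).natDegree = 1 ∨ 1 < (Φ (C X)).natDegree := by omega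
    · obtain ⟨F, hF, hdeg, a, hΦF⟩ := exists_monic_apply_eq_C hpos
      exact ⟨F, hF, hdeg.trans h1, by rwa [hΦF, natDegree_C]⟩
    · obtain ⟨h, hmod, hlt, hlead⟩ :=
        exists_modX_eq_natDegree_apply_lt (Φ := Φ) (g := X) (by simpa using h1)
      have hdeg : h.natDegree = 1 := by rw [← natDegree_modX hlead, hmod, natDegree_X]
      refine ⟨h, ?_, hdeg, hlt⟩
      rw [Monic, leadingCoeff_eq_C_coeff_modX hlead, hmod, hdeg, coeff_X_one, C_1]
  exact ⟨h.coeff 0, by rwa [← hmonic.eq_X_add_C hdeg]⟩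

theorem exists_eq_diagonal_mul (Φ : K[X][Y] ≃ₐ[K] K[X][Y]) :
    ∃ α β : Kˣ, ∃ τ ∈ elementarySubgroup K, Φ = diagonal α β * τ := by
  induction h : (Φ (C X)).natDegree using Nat.strong_induction_on generalizing Φ with
  | _ b ih =>
    obtain rfl | hpos := b.eq_zero_or_pos
    · exact exists_eq_diagonal_mul_of_natDegree_eq_zero h ((natDegree_symm_C_X Φ).trans h)
    · subst h
      obtain ⟨c, hc⟩ := exists_natDegree_apply_Y_add_C_lt hpos
      obtain ⟨α, β, τ, hτ, hΦ⟩ := ih _ hc (Φ * (shear c * rotation)) (by simp)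
      refine ⟨α, β, τ * (shear c * rotation)⁻¹, mul_mem hτ (inv_mem
        (mul_mem (shear_mem_elementarySubgroup c) rotation_mem_elementarySubgroup)), ?_⟩
      rw [← mul_assoc, ← hΦ, mul_inv_cancel_right]

end Field

end JungVanDerKulk

open JungVanDerKulk in
theorem statement13_general (K : Type*) [Field K]
    (σ : MvPolynomial (Fin 2) K ≃ₐ[K] MvPolynomial (Fin 2) K) :
    ∃ n : ℕ, 1 ≤ n ∧ ∃ μ ν : K, μ ≠ 0 ∧ ν ≠ 0 ∧
    ∃ g t : MvPolynomial (Fin 2) K ≃ₐ[K] MvPolynomial (Fin 2) K,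
    ∃ fs : ℕ → Polynomial K,
    ∃ w : ℕ → MvPolynomial (Fin 2) K ≃ₐ[K] MvPolynomial (Fin 2) K,
      (g (MvPolynomial.X 0) = MvPolynomial.C μ * MvPolynomial.X 0 ∧
        g (MvPolynomial.X 1) = MvPolynomial.X 1) ∧
      (t (MvPolynomial.X 0) = MvPolynomial.C ν * MvPolynomial.X 0 ∧
        t (MvPolynomial.X 1) = MvPolynomial.C ν⁻¹ * MvPolynomial.X 1) ∧
      (∀ k : ℕ, k < n →
        w (2 * k) (MvPolynomial.X 0) = MvPolynomial.X 0 ∧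
        w (2 * k) (MvPolynomial.X 1)
          = MvPolynomial.X 1 + Polynomial.aeval (MvPolynomial.X 0) (fs k)) ∧
      (∀ k : ℕ, k < n - 1 →
        w (2 * k + 1) (MvPolynomial.X 0) = MvPolynomial.X 1 ∧
        w (2 * k + 1) (MvPolynomial.X 1) = - MvPolynomial.X 0) ∧
      σ = g * t * ((List.range (2 * n - 1)).map w).prod := by
  obtain ⟨Φ, rfl⟩ := (autMvPolynomial K).surjective σ
  obtain ⟨α, β, τ, hτ, rfl⟩ := exists_eq_diagonal_mul Φ
  obtain ⟨fs, n, rfl⟩ := exists_word_eq_of_mem_elementarySubgroup hτ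
  refine ⟨n + 1, n.succ_pos, (α * β : Kˣ), (β⁻¹ : Kˣ), Units.ne_zero _, Units.ne_zero _,
    autMvPolynomial K (diagonal (α * β) 1), autMvPolynomial K (diagonal β⁻¹ β), fs,
    fun k ↦ autMvPolynomial K (letter fs k), ⟨?_, ?_⟩, ⟨?_, ?_⟩, fun k _ ↦ ⟨?_, ?_⟩,
    fun k _ ↦ ⟨?_, ?_⟩, ?product⟩
  case product =>
    have hdiag : diagonal (α * β) 1 * diagonal β⁻¹ β = diagonal α β := by
      rw [diagonal_mul_diagonal, mul_inv_cancel_right, one_mul]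
    rw [← hdiag, word, map_mul, map_mul, map_list_prod, List.map_map]
    rfl
  all_goals simp [autMvPolynomial_apply_X_zero, autMvPolynomial_apply_X_one, letter_two_mul,
    letter_two_mul_add_one, equivMvPolynomial_C]

theorem statement13 (p : ℕ) (hp : p.Prime) (K : Type*) [Field K] [CharP K p]
    (σ : MvPolynomial (Fin 2) K ≃ₐ[K] MvPolynomial (Fin 2) K) :
    ∃ n : ℕ, 1 ≤ n ∧ ∃ μ ν : K, μ ≠ 0 ∧ ν ≠ 0 ∧
    ∃ g t : MvPolynomial (Fin 2) K ≃ₐ[K] MvPolynomial (Fin 2) K,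
    ∃ fs : ℕ → Polynomial K,
    ∃ w : ℕ → MvPolynomial (Fin 2) K ≃ₐ[K] MvPolynomial (Fin 2) K,
      (g (MvPolynomial.X 0) = MvPolynomial.C μ * MvPolynomial.X 0 ∧
        g (MvPolynomial.X 1) = MvPolynomial.X 1) ∧
      (t (MvPolynomial.X 0) = MvPolynomial.C ν * MvPolynomial.X 0 ∧
        t (MvPolynomial.X 1) = MvPolynomial.C ν⁻¹ * MvPolynomial.X 1) ∧
      (∀ k : ℕ, k < n →
        w (2 * k) (MvPolynomial.X 0) = MvPolynomial.X 0 ∧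
        w (2 * k) (MvPolynomial.X 1)
          = MvPolynomial.X 1 + Polynomial.aeval (MvPolynomial.X 0) (fs k)) ∧
      (∀ k : ℕ, k < n - 1 →
        w (2 * k + 1) (MvPolynomial.X 0) = MvPolynomial.X 1 ∧
        w (2 * k + 1) (MvPolynomial.X 1) = - MvPolynomial.X 0) ∧
      σ = g * t * ((List.range (2 * n - 1)).map w).prod :=
  statement13_general K σ
end
end
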